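/- arXiv:gr-qc/0609074 — 3 statements merged into one kernel-verified Lean document; each statement's English description precedes it below -/
import Mathlib

section
/- Assume in addition that σ', regarded as a function of Ω, extends to a C¹ function on [0,ε) for some ε > 0, and that σ'₀ := lim_{η→0⁺} σ'(η) satisfies σ'₀ ≥ 1/(4+2l). Then every interior orbit of the Einstein–Vlasov dynamical system satisfies Ω(λ) → 0 and V(λ) → 1 as λ → +∞; that is, the ω-limit set of every interior orbit lies in {Ω = 0} ∩ {V = 1}. -/
open Filter Set

/-- Barbalat-type lemma. -/
lemma aux_barbalat (f f' G G' : ℝ → ℝ) (T B : ℝ) (C : ℝ) (hC : 0 < C)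
    (hf : ∀ t, HasDerivAt f (f' t) t) (hf' : ∀ t ≥ T, |f' t| ≤ C)
    (hf0 : ∀ t, 0 ≤ f t)
    (hG : ∀ t, HasDerivAt G (G' t) t) (hGf : ∀ t ≥ T, f t ≤ G' t)
    (hB : ∀ t ≥ T, G t ≤ B) : Tendsto f atTop (nhds 0) := by
  have hmono : MonotoneOn G (Ici T) := by
    apply monotoneOn_of_deriv_nonneg (convex_Ici T)
    · exact fun t _ => (hG t).continuousAt.continuousWithinAt
    · exact fun t _ => (hG t).differentiableAt.differentiableWithinAt
    · intro t ht
      rw [interior_Ici] at ht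
      rw [(hG t).deriv]
      exact (hf0 t).trans (hGf t (le_of_lt ht))
  -- lower bound of increments
  have key : ∀ e > 0, ∀ t ≥ T, e ≤ f t → G t + e / 2 * (e / (2 * C)) ≤ G (t + e / (2 * C)) := by
    intro e he t ht hft
    have hh : 0 < e / (2 * C) := by positivity
    have hlow : ∀ r ∈ Icc t (t + e / (2 * C)), e / 2 ≤ f r := by
      intro r hr
      have := (convex_Ici T).norm_image_sub_le_of_norm_hasDerivWithin_le (f := f) (f' := f') (C := C)
        (fun x _ => (hf x).hasDerivWithinAt) (fun x hx => hf' x hx) (show t ∈ Ici T from ht)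
        (show r ∈ Ici T from le_trans ht hr.1)
      rw [Real.norm_eq_abs, Real.norm_eq_abs, abs_of_nonneg (by linarith [hr.1] : 0 ≤ r - t)] at this
      have h2 : C * (r - t) ≤ C * (e / (2 * C)) := by
        apply mul_le_mul_of_nonneg_left _ hC.le
        linarith [hr.2]
      have h3 : C * (e / (2 * C)) = e / 2 := by field_simp
      have := (abs_le.1 this).1
      linarith
    have := (convex_Icc t (t + e / (2 * C))).mul_sub_le_image_sub_of_le_deriv (f := G) (C := e / 2)
      (fun t _ => (hG t).continuousAt.continuousWithinAt)
      (fun t _ => (hG t).differentiableAt.differentiableWithinAt)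
      (by
        intro r hr
        have hr' := interior_subset hr
        rw [(hG r).deriv]
        exact (hlow r hr').trans (hGf r (le_trans ht hr'.1)))
      t (left_mem_Icc.2 (by linarith)) (t + e / (2 * C)) (right_mem_Icc.2 (by linarith)) (by linarith)
    have h4 : t + e / (2 * C) - t = e / (2 * C) := by ring
    rw [h4] at this
    linarith
  have hbdd : BddAbove (G '' Ici T) := ⟨B, by rintro _ ⟨t, ht, rfl⟩; exact hB t ht⟩
  have hne : (G '' Ici T).Nonempty := ⟨G T, T, self_mem_Ici, rfl⟩
  rw [Metric.tendsto_atTop]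
  intro e he
  have hpos : 0 < e / 2 * (e / (2 * C)) := by positivity
  obtain ⟨_, ⟨N, hN, rfl⟩, hlt⟩ := exists_lt_of_lt_csSup hne (sub_lt_self (sSup (G '' Ici T)) hpos)
  refine ⟨N, fun t ht => ?_⟩
  have htT : T ≤ t := le_trans hN ht
  rw [Real.dist_eq, sub_zero, abs_of_nonneg (hf0 t)]
  by_contra hcon
  push Not at hcon
  have h1 := key e he t htT hcon
  have h2 := hmono hN htT ht
  have hh : 0 < e / (2 * C) := by positivity
  have h3 := le_csSup hbdd ⟨t + e / (2 * C), show T ≤ _ by linarith, rfl⟩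
  linarith

/-- Barrier. -/
lemma aux_barrier (x x' : ℝ → ℝ) (t₁ M : ℝ) (hx : ∀ t, HasDerivAt x (x' t) t)
    (h : ∀ t ≥ t₁, x t = M → 0 < x' t) (h1 : M ≤ x t₁) : ∀ t ≥ t₁, M ≤ x t := by
  intro t ht
  have := image_le_of_deriv_right_lt_deriv_boundary (f := fun t => - x t) (f' := fun t => - x' t)
    (a := t₁) (b := t) (B := fun _ => -M) (B' := fun _ => 0)
    (fun r _ => (hx r).neg.continuousAt.continuousWithinAt)
    (fun r _ => (hx r).neg.hasDerivWithinAt) (by simpa using h1)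
    (fun r => hasDerivAt_const r _)
    (by
      intro r hr he
      have := h r hr.1 (by simpa using he)
      simpa using this) (right_mem_Icc.2 ht)
  simpa using this

/-- Trap. -/
lemma aux_trap (x x' : ℝ → ℝ) (T M c : ℝ) (hc : 0 < c) (hx : ∀ t, HasDerivAt x (x' t) t)
    (h : ∀ t ≥ T, x t ≤ M → c ≤ x' t) : ∃ t₁ ≥ T, ∀ t ≥ t₁, M ≤ x t := by
  have hex : ∃ t₁ ≥ T, M ≤ x t₁ := by
    by_contra hcon
    push Not at hcon
    have hkey : ∀ t ≥ T, c * (t - T) ≤ x t - x T := by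
      intro t ht
      exact (convex_Ici T).mul_sub_le_image_sub_of_le_deriv (f := x) (C := c)
        (fun t _ => (hx t).continuousAt.continuousWithinAt)
        (fun t _ => (hx t).differentiableAt.differentiableWithinAt)
        (by
          intro r hr
          have hr' : T ≤ r := interior_subset hr
          rw [(hx r).deriv]
          exact h r hr' (hcon r hr').le)
        T self_mem_Ici t ht ht
    have hp : 0 ≤ (M - x T) / c := div_nonneg (by linarith [hcon T le_rfl]) hc.le
    have h1 := hkey (T + (M - x T) / c) (by linarith)
    have h2 := hcon (T + (M - x T) / c) (by linarith)
    have h3 : c * (T + (M - x T) / c - T) = M - x T := by field_simp; ring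
    linarith
  obtain ⟨t₁, ht₁, hM⟩ := hex
  exact ⟨t₁, ht₁, aux_barrier x x' t₁ M hx
    (fun t ht he => lt_of_lt_of_le hc (h t (le_trans ht₁ ht) he.le)) hM⟩

lemma aux_logit (U : ℝ → ℝ) (D : ℝ → ℝ) (hU : ∀ t : ℝ, U t ∈ Ioo (0:ℝ) 1)
    (h : ∀ t, HasDerivAt U (U t * (1 - U t) * D t) t) (t : ℝ) :
    HasDerivAt (fun t => Real.log (U t) - Real.log (1 - U t)) (D t) t := by
  have h0 := (hU t).1
  have h1 := (hU t).2
  have := ((h t).log h0.ne').sub (((h t).const_sub 1).log (by linarith))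
  refine this.congr_deriv ?_
  have h2 : 1 - U t ≠ 0 := by linarith
  have h3 : U t ≠ 0 := h0.ne'
  field_simp
  ring

lemma aux_logit_exp (u : ℝ) (hu : u ∈ Ioo (0:ℝ) 1) :
    Real.exp (Real.log u - Real.log (1 - u)) = u / (1 - u) := by
  rw [Real.exp_sub, Real.exp_log hu.1, Real.exp_log (by linarith [hu.2])]

lemma aux_logit_mono {u v : ℝ} (hu : u ∈ Ioo (0:ℝ) 1) (hv : v ∈ Ioo (0:ℝ) 1)
    (h : u < v) : Real.log u - Real.log (1 - u) < Real.log v - Real.log (1 - v) := by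
  have h1 := Real.log_lt_log hu.1 h
  have h2 := Real.log_lt_log (show 0 < 1 - v by linarith [hv.2]) (show 1 - v < 1 - u by linarith)
  linarith

/-- Case where the limit of `E` is positive: contradiction. -/
lemma aux_pos (a : ℝ) (ha : 1 < a) (U V S P E : ℝ → ℝ) (c B T : ℝ) (hc : 0 < c) (hB0 : 0 ≤ B)
    (hU : ∀ t : ℝ, U t ∈ Ioo (0:ℝ) 1) (hV : ∀ t : ℝ, V t ∈ Ioo (0:ℝ) 1)
    (hS0 : ∀ t, 0 < S t) (hS1 : ∀ t, S t < 1) (hSc : ∀ t ≥ T, c ≤ S t)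
    (hP : ∀ t ≥ T, |P t| ≤ B)
    (hUode : ∀ t : ℝ, HasDerivAt U
      (U t * (1 - U t) * ((a - (a + 1) * U t) * (1 - V t)
        - (1 + S t - P t) * ((1 - U t + S t * U t) * V t))) t)
    (hVode : ∀ t : ℝ, HasDerivAt V
      (V t * (1 - V t) * ((2 * U t - 1) * (1 - V t + 2 * S t * V t)
        + P t * ((1 - U t + S t * U t) * V t))) t)
    (hE0 : ∀ t, 0 < E t)
    (hEode : ∀ t, HasDerivAt E (-(S t * ((1 - U t + S t * U t) * V t))) t) : False := by
  have hH0 : ∀ t, 0 < 1 - U t + S t * U t := fun t => by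
    have := mul_pos (hS0 t) (hU t).1
    linarith [(hU t).2]
  have hH1 : ∀ t, 1 - U t + S t * U t ≤ 1 := fun t => by
    have := mul_pos (sub_pos.2 (hS1 t)) (hU t).1
    nlinarith
  have hHV : ∀ t, (1 - U t + S t * U t) * V t ≤ V t := fun t => by
    have := mul_le_mul_of_nonneg_right (hH1 t) (hV t).1.le
    linarith
  have hHV0 : ∀ t, 0 < (1 - U t + S t * U t) * V t := fun t => mul_pos (hH0 t) (hV t).1
  have hVlim : Tendsto V atTop (nhds 0) := by
    refine aux_barbalat V _ (fun t => - E t / c ^ 2) _ T 0 (3 + B) (by linarith) hVode ?_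
      (fun t => (hV t).1.le) (fun t => ((hEode t).neg.div_const (c^2))) ?_ ?_
    · intro t ht
      obtain ⟨hu0, hu1⟩ := hU t
      obtain ⟨hv0, hv1⟩ := hV t
      have h1 : |V t * (1 - V t)| ≤ 1 := by
        rw [abs_of_nonneg (mul_nonneg hv0.le (by linarith))]; nlinarith
      have h2 : |(2 * U t - 1)| ≤ 1 := abs_le.2 ⟨by linarith, by linarith⟩
      have hs := mul_pos (hS0 t) hv0
      have hs1 : S t * V t < 1 := by nlinarith [hS1 t]
      have h3 : |1 - V t + 2 * S t * V t| ≤ 3 := abs_le.2 ⟨by nlinarith, by nlinarith⟩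
      have h4 : |(1 - U t + S t * U t) * V t| ≤ 1 := by
        rw [abs_of_pos (hHV0 t)]; linarith [hHV t]
      rw [abs_mul]
      have h5 : |(2 * U t - 1) * (1 - V t + 2 * S t * V t) + P t * ((1 - U t + S t * U t) * V t)|
          ≤ 3 + B := by
        refine (abs_add_le _ _).trans ?_
        rw [abs_mul, abs_mul (P t)]
        have h6 := mul_le_mul h2 h3 (abs_nonneg _) zero_le_one
        have h7 := mul_le_mul (hP t ht) h4 (abs_nonneg _) hB0
        linarith
      have := mul_le_mul h1 h5 (abs_nonneg _) zero_le_one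
      linarith
    · intro t ht
      rw [neg_neg, le_div_iff₀ (by positivity)]
      have hSt := hSc t ht
      have h1 : c ≤ 1 - U t + S t * U t := by
        have := mul_nonneg (sub_nonneg.2 (hS1 t).le) (sub_nonneg.2 (hU t).2.le)
        nlinarith
      have h2 : c * V t ≤ (1 - U t + S t * U t) * V t := mul_le_mul_of_nonneg_right h1 (hV t).1.le
      have h3 := mul_le_mul hSt h2 (mul_pos hc (hV t).1).le (hS0 t).le
      nlinarith
    · intro t _
      have := hE0 t
      exact div_nonpos_of_nonpos_of_nonneg (by linarith) (by positivity)
  -- threshold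
  obtain ⟨θ, hθ1, hθ2⟩ : ∃ θ : ℝ, 1 / 2 < θ ∧ θ < a / (a + 1) := exists_between (by
    rw [div_lt_div_iff₀ (by norm_num) (by linarith)]; linarith)
  have hθ3 : 0 < a - (a + 1) * θ := by
    rw [lt_div_iff₀ (by linarith)] at hθ2; linarith
  have hθ4 : θ < 1 := by nlinarith
  have hθm : θ ∈ Ioo (0:ℝ) 1 := ⟨by linarith, hθ4⟩
  set d := a - (a + 1) * θ with hd
  have hsmall : ∀ e > 0, ∀ᶠ t in atTop, V t < e := fun e he => hVlim.eventually_lt_const he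
  obtain ⟨T1, hT1⟩ := eventually_atTop.1 ((hsmall (d / (2 * (d + 2 + B))) (by positivity)).and
    (eventually_ge_atTop T))
  obtain ⟨T2, hT2, hx⟩ := aux_trap _ _ T1 (Real.log θ - Real.log (1 - θ)) (d / 2) (by linarith)
    (aux_logit U _ hU hUode) (by
      intro t ht hxt
      have hUθ : U t ≤ θ := by
        by_contra hcon
        exact absurd (aux_logit_mono hθm (hU t) (not_le.1 hcon)) (not_lt.2 hxt)
      obtain ⟨hv, htT⟩ := hT1 t ht
      rw [lt_div_iff₀ (by positivity)] at hv
      obtain ⟨hv0, hv1⟩ := hV t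
      have h1 : d * (1 - V t) ≤ (a - (a + 1) * U t) * (1 - V t) := by
        apply mul_le_mul_of_nonneg_right _ (by linarith)
        nlinarith
      have h2 : (1 + S t - P t) * ((1 - U t + S t * U t) * V t) ≤ (2 + B) * V t := by
        refine (mul_le_mul_of_nonneg_right (?_ : _ ≤ 2 + B) (hHV0 t).le).trans
          (mul_le_mul_of_nonneg_left (hHV t) (by linarith))
        have := (abs_le.1 (hP t htT)).1
        linarith [hS1 t]
      nlinarith)
  have hUθ : ∀ t ≥ T2, θ ≤ U t := by
    intro t ht
    by_contra hcon
    exact absurd (aux_logit_mono (hU t) hθm (not_le.1 hcon)) (not_lt.2 (hx t ht))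
  set g := 2 * θ - 1 with hg
  have hg0 : 0 < g := by linarith
  obtain ⟨T3, hT3⟩ := eventually_atTop.1 ((hsmall (g / (2 * (g + B))) (by positivity)).and
    ((eventually_ge_atTop T).and (eventually_ge_atTop T2)))
  obtain ⟨T4, hT4, hy⟩ := aux_trap _ _ T3 0 (g / 2) (by linarith)
    (aux_logit V _ hV hVode) (by
      intro t ht _
      obtain ⟨hv, htT, ht2⟩ := hT3 t ht
      rw [lt_div_iff₀ (by positivity)] at hv
      obtain ⟨hv0, hv1⟩ := hV t
      have hu := hUθ t ht2
      have hs := mul_pos (hS0 t) hv0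
      have h1 : g * (1 - V t) ≤ (2 * U t - 1) * (1 - V t + 2 * S t * V t) :=
        mul_le_mul (by linarith) (by nlinarith) (by linarith) (by linarith)
      have h2 : -(B * V t) ≤ P t * ((1 - U t + S t * U t) * V t) := by
        have h3 := mul_le_mul_of_nonneg_right (abs_le.1 (hP t htT)).1 (hHV0 t).le
        have h4 := mul_le_mul_of_nonneg_left (hHV t) hB0
        linarith
      nlinarith)
  obtain ⟨T5, hT5⟩ := eventually_atTop.1 (hsmall (1 / 4) (by norm_num))
  have h1 := hT5 (max T4 T5) (le_max_right _ _)
  have h2 := hy (max T4 T5) (le_max_left _ _)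
  have h3 := aux_logit_mono (hV (max T4 T5)) (v := 1 / 2) (by norm_num) (by linarith)
  norm_num at h3
  linarith

/-- Case where `E` tends to zero: `V → 1`. -/
lemma aux_zero (a : ℝ) (ha : 1 < a) (U V S P R W' : ℝ → ℝ) (k₁ k₂ T : ℝ) (hk₁ : 0 < k₁)
    (hU : ∀ t : ℝ, U t ∈ Ioo (0:ℝ) 1) (hV : ∀ t : ℝ, V t ∈ Ioo (0:ℝ) 1)
    (hS0 : ∀ t, 0 < S t) (hS1 : ∀ t, S t < 1) (hSlim : Tendsto S atTop (nhds 0))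
    (hP : ∀ t ≥ T, P t ∈ Ioo k₁ k₂)
    (hUode : ∀ t : ℝ, HasDerivAt U
      (U t * (1 - U t) * ((a - (a + 1) * U t) * (1 - V t)
        - (1 + S t - P t) * ((1 - U t + S t * U t) * V t))) t)
    (hVode : ∀ t : ℝ, HasDerivAt V
      (V t * (1 - V t) * ((2 * U t - 1) * (1 - V t + 2 * S t * V t)
        + P t * ((1 - U t + S t * U t) * V t))) t)
    (hR : Tendsto R atTop (nhds 0))
    (hW : ∀ t, HasDerivAt (fun t => (Real.log (U t) - Real.log (1 - U t))
      + a * (Real.log (V t) - Real.log (1 - V t)) - R t) (W' t) t)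
    (hW' : ∀ t ≥ T, (a - 1) * (U t * (1 - V t)) ≤ W' t) :
    Tendsto V atTop (nhds 1) := by
  have hH0 : ∀ t, 0 < 1 - U t + S t * U t := fun t => by
    have := mul_pos (hS0 t) (hU t).1
    linarith [(hU t).2]
  have hH1 : ∀ t, 1 - U t + S t * U t ≤ 1 := fun t => by
    have := mul_pos (sub_pos.2 (hS1 t)) (hU t).1
    nlinarith
  have hHV : ∀ t, (1 - U t + S t * U t) * V t ≤ V t := fun t => by
    have := mul_le_mul_of_nonneg_right (hH1 t) (hV t).1.le
    linarith
  have hHV0 : ∀ t, 0 < (1 - U t + S t * U t) * V t := fun t => mul_pos (hH0 t) (hV t).1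
  have hxd := aux_logit U _ hU hUode
  have hyd := aux_logit V _ hV hVode
  set x : ℝ → ℝ := fun t => Real.log (U t) - Real.log (1 - U t) with hx
  set y : ℝ → ℝ := fun t => Real.log (V t) - Real.log (1 - V t) with hy
  set W : ℝ → ℝ := fun t => x t + a * y t - R t with hWd
  have hk₂ : 0 < k₂ := by have := hP T le_rfl; linarith [this.1, this.2]
  have hfpos : ∀ t, 0 ≤ U t * (1 - V t) := fun t =>
    mul_nonneg (hU t).1.le (by linarith [(hV t).2])
  have hmono : MonotoneOn W (Ici T) := by
    apply monotoneOn_of_deriv_nonneg (convex_Ici T)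
    · exact fun t _ => (hW t).continuousAt.continuousWithinAt
    · exact fun t _ => (hW t).differentiableAt.differentiableWithinAt
    · intro t ht
      rw [interior_Ici] at ht
      rw [(hW t).deriv]
      exact (mul_nonneg (by linarith) (hfpos t)).trans (hW' t (le_of_lt ht))
  -- it suffices that V is eventually bigger than 1 - δ
  have hsuff : (∀ δ > 0, δ < 1 → ∀ᶠ t in atTop, 1 - V t < δ) → Tendsto V atTop (nhds 1) := by
    intro h
    refine tendsto_order.2 ⟨fun b hb => ?_, fun b hb => Eventually.of_forall fun t =>
      (hV t).2.trans hb⟩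
    filter_upwards [h (min (1 - b) (1 / 2)) (lt_min (by linarith) (by norm_num))
      (lt_of_le_of_lt (min_le_right _ _) (by norm_num))] with t ht
    linarith [min_le_left (1 - b) (1 / 2)]
  have hRsmall : ∀ᶠ t in atTop, -1 < R t := hR.eventually_const_lt (by norm_num)
  by_cases hbd : ∃ B, ∀ t ≥ T, W t ≤ B
  · -- bounded case
    obtain ⟨B, hB⟩ := hbd
    have hflim : Tendsto (fun t => U t * (1 - V t)) atTop (nhds 0) := by
      refine aux_barbalat _ _ (fun t => W t / (a - 1)) _ T (B / (a - 1)) (a + a + 3 + 2 * k₂ + 2)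
        (by linarith) (fun t => (hUode t).mul ((hVode t).const_sub 1)) ?_ hfpos
        (fun t => (hW t).div_const (a - 1)) ?_ ?_
      · intro t ht
        obtain ⟨hu0, hu1⟩ := hU t
        obtain ⟨hv0, hv1⟩ := hV t
        obtain ⟨hp0, hp1⟩ := hP t ht
        have hs := mul_pos (hS0 t) hv0
        have hs1 : S t * V t < 1 := by nlinarith [hS1 t]
        have h3 : |1 - V t + 2 * S t * V t| ≤ 3 := abs_le.2 ⟨by nlinarith, by nlinarith⟩
        have h4 : |(1 - U t + S t * U t) * V t| ≤ 1 := by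
          rw [abs_of_pos (hHV0 t)]; linarith [hHV t]
        have hPa : |P t| ≤ k₂ := abs_le.2 ⟨by linarith, hp1.le⟩
        have hPb : |1 + S t - P t| ≤ 2 + k₂ :=
          abs_le.2 ⟨by linarith [hS0 t], by linarith [hS1 t]⟩
        have h2 : |(2 * U t - 1)| ≤ 1 := abs_le.2 ⟨by linarith, by linarith⟩
        have h2a : |(a - (a + 1) * U t)| ≤ a := abs_le.2 ⟨by nlinarith, by nlinarith⟩
        have h2b : |1 - V t| ≤ 1 := abs_le.2 ⟨by linarith, by linarith⟩
        have hu : |U t * (1 - U t)| ≤ 1 := by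
          rw [abs_of_nonneg (mul_nonneg hu0.le (by linarith))]; nlinarith
        have hv : |V t * (1 - V t)| ≤ 1 := by
          rw [abs_of_nonneg (mul_nonneg hv0.le (by linarith))]; nlinarith
        have hua : |U t| ≤ 1 := abs_le.2 ⟨by linarith, by linarith⟩
        have h5 : |(2 * U t - 1) * (1 - V t + 2 * S t * V t) + P t * ((1 - U t + S t * U t) * V t)|
            ≤ 3 + k₂ := by
          refine (abs_add_le _ _).trans ?_
          rw [abs_mul, abs_mul (P t)]
          have h6 := mul_le_mul h2 h3 (abs_nonneg _) zero_le_one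
          have h7 := mul_le_mul hPa h4 (abs_nonneg _) hk₂.le
          linarith
        have h6 : |(a - (a + 1) * U t) * (1 - V t)
            - (1 + S t - P t) * ((1 - U t + S t * U t) * V t)| ≤ a + (2 + k₂) := by
          refine (abs_sub _ _).trans ?_
          rw [abs_mul, abs_mul (1 + S t - P t)]
          have h6 := mul_le_mul h2a h2b (abs_nonneg _) (by linarith)
          have h7 := mul_le_mul hPb h4 (abs_nonneg _) (by linarith)
          linarith
        refine (abs_add_le _ _).trans ?_
        rw [abs_mul, abs_mul (U t * (1 - U t)), abs_mul (U t) (-_), abs_neg, abs_mul (V t * (1 - V t))]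
        have h7 := mul_le_mul (mul_le_mul hu h6 (abs_nonneg _) zero_le_one) h2b (abs_nonneg _)
          (by linarith)
        have h8 := mul_le_mul hua (mul_le_mul hv h5 (abs_nonneg _) zero_le_one)
          (by positivity) zero_le_one
        linarith
      · intro t ht
        rw [le_div_iff₀ (by linarith)]
        linarith [hW' t ht]
      · intro t ht
        exact div_le_div_of_nonneg_right (hB t ht) (by linarith)
    apply hsuff
    intro δ hδ hδ1
    set q := min 1 (Real.exp (W T - 1 + a * Real.log δ)) with hq
    have hq0 : 0 < q := lt_min one_pos (Real.exp_pos _)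
    have hq1 : q ≤ 1 := min_le_left _ _
    filter_upwards [hflim.eventually_lt_const (show 0 < δ * (q / 2) by positivity), hRsmall,
      eventually_ge_atTop T] with t hft hRt htT
    by_contra hcon
    push Not at hcon
    obtain ⟨hu0, hu1⟩ := hU t
    obtain ⟨hv0, hv1⟩ := hV t
    have hUq : U t < q / 2 := by
      by_contra hc
      push Not at hc
      have := mul_le_mul hc hcon hδ.le hu0.le
      linarith
    have h1 : W T ≤ W t := hmono self_mem_Ici htT htT
    have h2 : y t ≤ - Real.log δ := by
      have h3 := Real.log_le_log hδ hcon
      have h4 := Real.log_nonpos hv0.le hv1.le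
      simp only [hy]; linarith
    have h3 : W T - 1 + a * Real.log δ ≤ x t := by
      have : a * y t ≤ a * (-Real.log δ) := mul_le_mul_of_nonneg_left h2 (by linarith)
      simp only [hWd] at h1 ⊢
      linarith
    have h4 : q ≤ Real.exp (x t) := (min_le_right _ _).trans (Real.exp_le_exp.2 h3)
    rw [show x t = _ from rfl, aux_logit_exp _ (hU t), le_div_iff₀ (by linarith)] at h4
    nlinarith
  · -- unbounded case
    push Not at hbd
    have hWtop : ∀ K, ∀ᶠ t in atTop, K < W t := by
      intro K
      obtain ⟨t₀, ht₀, hK⟩ := hbd K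
      filter_upwards [eventually_ge_atTop t₀] with t ht
      exact hK.trans_le (hmono ht₀ (le_trans ht₀ ht) ht)
    have hxytop : ∀ K, ∀ᶠ t in atTop, K < x t + a * y t := by
      intro K
      filter_upwards [hWtop (K + 1), hRsmall] with t h1 h2
      simp only [hWd] at h1
      linarith
    have hypos : ∀ t ≥ T, 1 / 2 ≤ U t → 0 < (2 * U t - 1) * (1 - V t + 2 * S t * V t)
        + P t * ((1 - U t + S t * U t) * V t) := by
      intro t ht hu
      have h1 := mul_pos (lt_trans hk₁ (hP t ht).1) (hHV0 t)
      have h2 := mul_pos (hS0 t) (hV t).1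
      have h3 : 0 ≤ (2 * U t - 1) * (1 - V t + 2 * S t * V t) :=
        mul_nonneg (by linarith) (by nlinarith [(hV t).2])
      linarith
    have hhalf : ∀ t, U t < 1 / 2 → x t < 0 := by
      intro t ht
      have := aux_logit_mono (hU t) (v := 1 / 2) (by norm_num) ht
      norm_num at this
      simp only [hx]; linarith
    have hyV : ∀ t, 1 - V t ≤ Real.exp (- y t) := by
      intro t
      have h1 := aux_logit_exp _ (hV t)
      rw [Real.exp_neg, show y t = _ from rfl, h1, inv_div, le_div_iff₀ (hV t).1]
      nlinarith [(hV t).1, (hV t).2]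
    have hsuff2 : (∀ κ, ∀ᶠ t in atTop, κ ≤ y t) → Tendsto V atTop (nhds 1) := by
      intro h
      apply hsuff
      intro δ hδ hδ1
      filter_upwards [h (-Real.log (δ / 2))] with t ht
      have h1 := hyV t
      have h2 : Real.exp (- y t) ≤ δ / 2 := by
        rw [← Real.exp_log (show 0 < δ / 2 by positivity)]
        exact Real.exp_le_exp.2 (by linarith)
      linarith
    apply hsuff2
    intro κ
    by_cases hi : ∃ T', ∀ t ≥ T', 1 / 2 ≤ U t
    · obtain ⟨T₁, hT₁⟩ := hi
      set T' := max T T₁ with hT'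
      have hymono : MonotoneOn y (Ici T') := by
        apply monotoneOn_of_deriv_nonneg (convex_Ici T')
        · exact fun t _ => (hyd t).continuousAt.continuousWithinAt
        · exact fun t _ => (hyd t).differentiableAt.differentiableWithinAt
        · intro t ht
          rw [interior_Ici] at ht
          rw [(hyd t).deriv]
          exact (hypos t ((le_max_left _ _).trans (le_of_lt ht))
            (hT₁ t ((le_max_right _ _).trans (le_of_lt ht)))).le
      by_cases hyb : ∃ t₀ ≥ T', κ ≤ y t₀
      · obtain ⟨t₀, ht₀, hK⟩ := hyb
        filter_upwards [eventually_ge_atTop t₀] with t ht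
        exact hK.trans (hymono ht₀ (le_trans ht₀ ht) ht)
      exfalso
      push Not at hyb
      set δ := (1 + Real.exp κ)⁻¹ with hδ
      have hδ0 : 0 < δ := inv_pos.2 (by positivity)
      have hVδ : ∀ t ≥ T', δ ≤ 1 - V t := by
        intro t ht
        have h1 := aux_logit_exp _ (hV t)
        have h2 : Real.exp (y t) ≤ Real.exp κ := Real.exp_le_exp.2 (hyb t ht).le
        rw [show y t = _ from rfl, h1, div_le_iff₀ (by linarith [(hV t).2])] at h2
        rw [hδ, inv_le_iff_one_le_mul₀ (by positivity)]
        nlinarith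
      set ρ := min (1 / (2 * (a + 1))) (δ / (8 * k₂)) with hρ
      have hρ0 : 0 < ρ := lt_min (by positivity) (by positivity)
      have hρ1 : ρ * (a + 1) ≤ 1 / 2 := by
        have h1 : ρ ≤ 1 / (2 * (a + 1)) := min_le_left _ _
        rw [le_div_iff₀ (by linarith)] at h1
        linarith
      have hρ2 : ρ * k₂ ≤ δ / 8 := by
        have h1 : ρ ≤ δ / (8 * k₂) := min_le_right _ _
        rw [le_div_iff₀ (by linarith)] at h1
        linarith
      obtain ⟨T2, hT2⟩ := eventually_atTop.1
        ((hSlim.eventually_lt_const (show 0 < δ / (8 * k₂) by positivity)).and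
        (eventually_ge_atTop T'))
      obtain ⟨T3, hT3, hx3⟩ := aux_trap (fun t => - x t) _ T2 (Real.log ρ) (δ / 4) (by linarith)
        (fun t => (hxd t).neg) (by
          intro t ht hxt
          obtain ⟨hs, htT'⟩ := hT2 t ht
          rw [lt_div_iff₀ (by linarith)] at hs
          obtain ⟨hu0, hu1⟩ := hU t
          obtain ⟨hv0, hv1⟩ := hV t
          obtain ⟨hp0, hp1⟩ := hP t (le_trans (le_max_left _ _) htT')
          have hUρ : 1 - U t ≤ ρ := by
            rw [← Real.log_le_log_iff (by linarith) hρ0]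
            have := Real.log_nonpos hu0.le hu1.le
            simp only [hx] at hxt
            linarith
          have h1 : (a - (a + 1) * U t) * (1 - V t) ≤ -(1 / 2) * δ := by
            have h2 : a - (a + 1) * U t ≤ - (1 / 2) := by nlinarith
            have h3 := hVδ t htT'
            nlinarith
          have hH := hHV0 t
          have hH2 : (1 - U t + S t * U t) * V t ≤ ρ + S t := by
            have h4 : 1 - U t + S t * U t ≤ ρ + S t := by nlinarith [hS0 t]
            nlinarith [hS0 t, hH0 t]
          have h5 : -((1 + S t - P t) * ((1 - U t + S t * U t) * V t)) ≤ k₂ * (ρ + S t) := by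
            have h6 := mul_le_mul_of_nonneg_left hH2 hk₂.le
            have h7 := mul_nonneg (show 0 ≤ 1 + S t - P t + k₂ by linarith [hS0 t]) hH.le
            linarith
          linarith)
      obtain ⟨t, ht1, ht2⟩ := ((hxytop (-Real.log ρ + a * κ)).and
        (eventually_ge_atTop (max T' T3))).exists
      have h1 := hx3 t ((le_max_right _ _).trans ht2)
      have h2 := hyb t ((le_max_left _ _).trans ht2)
      have h3 : a * y t ≤ a * κ := mul_le_mul_of_nonneg_left h2.le (by linarith)
      linarith
    · push Not at hi
      obtain ⟨T1, hT1⟩ := eventually_atTop.1 ((hxytop (a * κ)).and (eventually_ge_atTop T))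
      obtain ⟨t₁, ht₁, hut₁⟩ := hi T1
      filter_upwards [eventually_ge_atTop t₁] with t ht
      refine aux_barrier y _ t₁ κ hyd ?_ ?_ t ht
      · intro r hr hyr
        obtain ⟨h1, h2⟩ := hT1 r (le_trans ht₁ hr)
        apply hypos r h2
        by_contra hcon
        have := hhalf r (not_le.1 hcon)
        rw [hyr] at h1
        linarith
      · have h1 := (hT1 t₁ ht₁).1
        have h2 := hhalf t₁ hut₁
        have : a * κ < a * y t₁ := by linarith
        exact (lt_of_mul_lt_mul_left this (by linarith)).le

/-- Differentiability of `E`. -/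
lemma aux_E (ω E g : ℝ → ℝ) (w' t : ℝ) (hω : ContDiffAt ℝ 1 ω (E t))
    (hωd : HasDerivAt ω w' (E t)) (hw' : w' ≠ 0) (hE : ContinuousAt E t) (d : ℝ)
    (hg : HasDerivAt g d t) (hgE : ∀ s, g s = ω (E s)) : HasDerivAt E (w'⁻¹ * d) t := by
  have hs : HasStrictDerivAt ω w' (E t) := hω.hasStrictDerivAt' hωd one_ne_zero
  have h1 := hs.eventually_left_inverse hw'
  have h2 := hs.to_localInverse hw'
  have h3 : HasDerivAt (hs.localInverse ω w' (E t) hw') w'⁻¹ (g t) := by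
    rw [hgE]; exact h2.hasDerivAt
  refine (h3.comp t hg).congr_of_eventuallyEq ?_
  filter_upwards [hE.eventually h1] with r hr
  rw [Function.comp, hgE, hr]

/-- If `σ'`, as a function of `Ω`, extends to a `C¹` function on `[0,ε)`, and `σ'₀ = lim_{η→0⁺} σ'(η)` satisfies `σ'₀ ≥ 1/(4+2l)`, then every interior orbit satisfies `Ω → 0` and `V → 1` as `λ → +∞`. -/
theorem stmt5
    (l : ℝ) (hl : -1 < l)
    (σ σ' : ℝ → ℝ)
    (hσderiv : ∀ η : ℝ, 0 < η → HasDerivAt σ (σ' η) η)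
    (hσ'cont : ContinuousOn σ' (Ioi 0))
    (hσrange : ∀ η : ℝ, 0 < η → σ η ∈ Ioo 0 (1 / (3 + 2 * l)))
    (hσ0 : Tendsto σ (nhdsWithin 0 (Ioi 0)) (nhds 0))
    (k₁ k₂ : ℝ) (hk₁ : 0 < k₁) (hk₁₂ : k₁ < k₂)
    (hσ'near : ∃ η₀ > (0:ℝ), ∀ η ∈ Ioo (0:ℝ) η₀, σ' η ∈ Ioo k₁ k₂)
    (ω ω' : ℝ → ℝ)
    (hωsmooth : ContDiffOn ℝ (⊤ : ℕ∞) ω (Ioi 0))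
    (hωderiv : ∀ η : ℝ, 0 < η → HasDerivAt ω (ω' η) η)
    (hωpos : ∀ η : ℝ, 0 < η → 0 < ω η)
    (hωmono : StrictMonoOn ω (Ioi 0))
    (hω0 : Tendsto ω (nhdsWithin 0 (Ioi 0)) (nhds 0))
    (F : ℝ → ℝ) (hFdef : ∀ η : ℝ, 0 < η → F η = σ η * (ω' η / ω η))
    (Flo Fhi : ℝ) (hFlo : 0 < Flo)
    (hFbounds : ∀ η : ℝ, 0 < η → F η ∈ Icc Flo Fhi)
    (U V E Ω : ℝ → ℝ)
    (hΩdef : ∀ t : ℝ, Ω t = ω (E t) / (1 + ω (E t)))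
    (hU : ∀ t : ℝ, U t ∈ Ioo (0:ℝ) 1) (hV : ∀ t : ℝ, V t ∈ Ioo (0:ℝ) 1)
    (hE : ∀ t : ℝ, 0 < E t) (hEcont : Continuous E)
    (hUode : ∀ t : ℝ, HasDerivAt U
      (U t * (1 - U t) * ((3 + 2 * l - (4 + 2 * l) * U t) * (1 - V t)
        - (1 + σ (E t) - σ' (E t)) * ((1 - U t + σ (E t) * U t) * V t))) t)
    (hVode : ∀ t : ℝ, HasDerivAt V
      (V t * (1 - V t) * ((2 * U t - 1) * (1 - V t + 2 * σ (E t) * V t)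
        + σ' (E t) * ((1 - U t + σ (E t) * U t) * V t))) t)
    (hΩode : ∀ t : ℝ, HasDerivAt Ω
      (-(Ω t * (1 - Ω t) * F (E t) * ((1 - U t + σ (E t) * U t) * V t))) t)
    (ε σ'₀ : ℝ) (hε : 0 < ε) (s : ℝ → ℝ)
    (hsC1 : ContDiffOn ℝ 1 s (Ico 0 ε))
    (hscompat : ∀ η : ℝ, 0 < η → ω η / (1 + ω η) < ε →
      s (ω η / (1 + ω η)) = σ' η)
    (hσ'lim : Tendsto σ' (nhdsWithin 0 (Ioi 0)) (nhds σ'₀))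
    (hge : 1 / (4 + 2 * l) ≤ σ'₀) :
    Tendsto Ω atTop (nhds 0) ∧ Tendsto V atTop (nhds 1) := by
  set a : ℝ := 3 + 2 * l with ha_def
  have ha : 1 < a := by linarith
  have ha1 : 4 + 2 * l = a + 1 := by rw [ha_def]; ring
  rw [ha1] at hge
  simp only [ha1] at hUode
  have hS0 : ∀ t, 0 < σ (E t) := fun t => (hσrange _ (hE t)).1
  have hS1 : ∀ t, σ (E t) < 1 := fun t => (hσrange _ (hE t)).2.trans (by
    rw [div_lt_one (by linarith)]; exact ha)
  have hH0 : ∀ t, 0 < (1 - U t + σ (E t) * U t) * V t := fun t => by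
    have := mul_pos (hS0 t) (hU t).1
    exact mul_pos (by linarith [(hU t).2]) (hV t).1
  have hω'pos : ∀ η : ℝ, 0 < η → 0 < ω' η := by
    intro η hη
    have h1 := (hFbounds η hη).1
    rw [hFdef η hη] at h1
    have h2 : 0 < σ η * (ω' η / ω η) := lt_of_lt_of_le hFlo h1
    have h3 := pos_of_mul_pos_right h2 (hσrange η hη).1.le
    have h4 := mul_pos h3 (hωpos η hη)
    rwa [div_mul_cancel₀ _ (hωpos η hη).ne'] at h4
  have hΩ01 : ∀ t, Ω t ∈ Ioo (0:ℝ) 1 := by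
    intro t
    have h := hωpos _ (hE t)
    rw [hΩdef]
    exact ⟨by positivity, by rw [div_lt_one (by linarith)]; linarith⟩
  -- derivative of E
  have hEode : ∀ t, HasDerivAt E
      (-(σ (E t) * ((1 - U t + σ (E t) * U t) * V t))) t := by
    intro t
    have hw := hωpos _ (hE t)
    have hw' := hω'pos _ (hE t)
    have hΩt := hΩ01 t
    have h1Ω : (1 - Ω t) ≠ 0 := by linarith [hΩt.2]
    have hgE : ∀ r, Ω r / (1 - Ω r) = ω (E r) := by
      intro r
      have h := hωpos _ (hE r)
      rw [hΩdef]
      have h2 : (1 + ω (E r)) ≠ 0 := by linarith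
      field_simp
      ring
    have hg := (hΩode t).div ((hΩode t).const_sub 1) h1Ω
    have hcd : ContDiffAt ℝ 1 ω (E t) :=
      ((hωsmooth.contDiffAt (Ioi_mem_nhds (hE t))).of_le (by exact_mod_cast le_top))
    refine (aux_E ω E _ (ω' (E t)) t hcd (hωderiv _ (hE t)) hw'.ne' hEcont.continuousAt _ hg
      hgE).congr_deriv ?_
    rw [hFdef _ (hE t), hΩdef t]
    have h2 : (1 + ω (E t)) ≠ 0 := by linarith
    have h3 : 1 - ω (E t) / (1 + ω (E t)) = 1 / (1 + ω (E t)) := by field_simp; ring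
    rw [h3]
    have h4 := hw.ne'
    have h5 := hw'.ne'
    field_simp
    ring
  have hEanti : Antitone E := by
    apply antitone_of_deriv_nonpos (fun t => (hEode t).differentiableAt)
    intro t
    rw [(hEode t).deriv]
    have := mul_pos (hS0 t) (hH0 t)
    linarith
  -- E tends to zero
  have hElim : Tendsto E atTop (nhds 0) := by
    have hbb : BddBelow (range E) := ⟨0, by rintro _ ⟨t, rfl⟩; exact (hE t).le⟩
    have hlim := tendsto_atTop_ciInf hEanti hbb
    have hge0 : 0 ≤ ⨅ t, E t := le_ciInf fun t => (hE t).le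
    rcases hge0.eq_or_lt with h0 | hpos
    · rwa [← h0] at hlim
    exfalso
    set m := ⨅ t, E t with hm
    have hmem : ∀ t ≥ (0:ℝ), E t ∈ Icc m (E 0) := fun t ht => ⟨ciInf_le hbb t, hEanti ht⟩
    have hsub : Icc m (E 0) ⊆ Ioi 0 := fun z hz => lt_of_lt_of_le hpos hz.1
    obtain ⟨B, hB⟩ := isCompact_Icc.exists_bound_of_continuousOn (hσ'cont.mono hsub)
    obtain ⟨z, hz, hzmin⟩ := isCompact_Icc.exists_isMinOn (f := σ) ⟨E 0, hmem 0 le_rfl⟩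
      (fun z hz => (hσderiv z (hsub hz)).continuousAt.continuousWithinAt)
    exact aux_pos a ha U V (fun t => σ (E t)) (fun t => σ' (E t)) E (σ z) B 0
      (hσrange z (hsub hz)).1 ((norm_nonneg _).trans (hB _ (hmem 0 le_rfl))) hU hV hS0 hS1
      (fun t ht => hzmin (hmem t ht)) (fun t ht => hB _ (hmem t ht)) hUode hVode hE hEode
  have hElim' : Tendsto E atTop (nhdsWithin 0 (Ioi 0)) :=
    tendsto_nhdsWithin_iff.2 ⟨hElim, Eventually.of_forall hE⟩
  have hq0 : Tendsto (fun η => ω η / (1 + ω η)) (nhdsWithin 0 (Ioi 0)) (nhds 0) := by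
    have := hω0.div (hω0.const_add 1) (by norm_num)
    rw [zero_div] at this
    exact this
  have hΩlim : Tendsto Ω atTop (nhds 0) := by
    have := hq0.comp hElim'
    exact this.congr fun t => (hΩdef t).symm
  refine ⟨hΩlim, ?_⟩
  -- Lipschitz bound for σ'
  have hqw : Tendsto (fun η => ω η / (1 + ω η)) (nhdsWithin 0 (Ioi 0))
      (nhdsWithin 0 (Ico 0 ε)) := by
    refine tendsto_nhdsWithin_iff.2 ⟨hq0, ?_⟩
    filter_upwards [hq0.eventually_lt_const hε, self_mem_nhdsWithin] with η h1 h2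
    have := hωpos η h2
    exact ⟨by positivity, h1⟩
  have h0mem : (0:ℝ) ∈ Ico 0 ε := ⟨le_rfl, hε⟩
  have hs0 : s 0 = σ'₀ := by
    have h1 : Tendsto s (nhdsWithin 0 (Ico 0 ε)) (nhds (s 0)) := hsC1.continuousOn 0 h0mem
    have h2 := h1.comp hqw
    refine tendsto_nhds_unique (h2.congr' ?_) hσ'lim
    filter_upwards [hq0.eventually_lt_const hε, self_mem_nhdsWithin] with η h3 h4
    exact hscompat η h4 h3
  obtain ⟨C, hC0, hC⟩ : ∃ C > 0, ∀ᶠ t in atTop, σ'₀ - C * Ω t ≤ σ' (E t) := by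
    have hd := ((hsC1.differentiableOn one_ne_zero) 0 h0mem).isBigO_sub
    obtain ⟨C, hC0, hC⟩ := hd.exists_pos
    refine ⟨C, hC0, ?_⟩
    filter_upwards [(hqw.comp hElim').eventually hC.bound,
      (hq0.comp hElim').eventually_lt_const hε] with t h1 h2
    simp only [Function.comp] at h1 h2
    rw [hscompat _ (hE t) h2, ← hΩdef, hs0, sub_zero, Real.norm_eq_abs, Real.norm_eq_abs,
      abs_of_pos (hΩ01 t).1] at h1
    linarith [(abs_le.1 h1).1]
  obtain ⟨η₀, hη₀, hnear⟩ := hσ'near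
  have hev : ∀ᶠ t in atTop, σ'₀ - C * Ω t ≤ σ' (E t) ∧ E t < η₀ ∧ Ω t < 1 / 2 :=
    hC.and ((hElim.eventually_lt_const hη₀).and (hΩlim.eventually_lt_const (by norm_num)))
  obtain ⟨T, hT⟩ := eventually_atTop.1 hev
  set C' := 2 * (a + 1) * C / Flo with hC'
  have hC'F : C' * Flo = 2 * (a + 1) * C := by rw [hC']; field_simp
  have hC'0 : 0 < C' := by positivity
  refine aux_zero a ha U V (fun t => σ (E t)) (fun t => σ' (E t))
    (fun t => (1 + 2 * a) * E t + C' * Ω t) _ k₁ k₂ T hk₁ hU hV hS0 hS1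
    (hσ0.comp hElim') (fun t ht => hnear _ ⟨hE t, (hT t ht).2.1⟩) hUode hVode ?_
    (fun t => ((aux_logit U _ hU hUode t).add ((aux_logit V _ hV hVode t).const_mul a)).sub
      (((hEode t).const_mul (1 + 2 * a)).add ((hΩode t).const_mul C'))) ?_
  · simpa using (hElim.const_mul (1 + 2 * a)).add (hΩlim.const_mul C')
  · intro t ht
    obtain ⟨h1, h2, h3⟩ := hT t ht
    have hH := hH0 t
    obtain ⟨hu0, hu1⟩ := hU t
    obtain ⟨hv0, hv1⟩ := hV t
    have hs := hS0 t
    have hF := (hFbounds _ (hE t)).1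
    have hΩt := (hΩ01 t).1
    set H := (1 - U t + σ (E t) * U t) * V t with hHd
    -- the Ω term
    have hA : (a + 1) * C * Ω t ≤ C' * (Ω t * (1 - Ω t) * F (E t)) := by
      have h4 : Ω t * (1 / 2) * Flo ≤ Ω t * (1 - Ω t) * F (E t) :=
        mul_le_mul (mul_le_mul_of_nonneg_left (by linarith) hΩt.le) hF hFlo.le
          (mul_nonneg hΩt.le (by linarith))
      have h5 := mul_le_mul_of_nonneg_left h4 hC'0.le
      have h6 : C' * (Ω t * (1 / 2) * Flo) = (a + 1) * C * Ω t := by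
        linear_combination (Ω t / 2) * hC'F
      linarith
    have hAH := mul_le_mul_of_nonneg_right hA hH.le
    -- the σ' term
    have hB : -((a + 1) * C * Ω t) ≤ (a + 1) * σ' (E t) - 1 := by
      rw [div_le_iff₀ (by linarith)] at hge
      have := mul_le_mul_of_nonneg_left h1 (show 0 ≤ a + 1 by linarith)
      linarith
    have hBH := mul_le_mul_of_nonneg_right hB hH.le
    -- the σ term
    have hD : -H ≤ V t * (2 * U t - 1) := by
      have := mul_pos (mul_pos hs hu0) hv0
      have := mul_pos hu0 hv0
      rw [hHd]; nlinarith
    have hDS := mul_le_mul_of_nonneg_left hD (show 0 ≤ 2 * a * σ (E t) by positivity)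
    linarith
end

section
/- The α-limit set (taken in [0,1]³, as λ → −∞) of every interior orbit of the Einstein–Vlasov dynamical system is contained in the union of the face {Ω = 1}, the line L₁ = {(1, 0, Ω₀) : Ω₀ ∈ (0,1)}, and the line L₂ = {((3+2l)/(4+2l), 0, Ω₀) : Ω₀ ∈ (0,1)}. -/
open Filter Set

lemma exp_compare (X f : ℝ → ℝ) (hX : ∀ t, HasDerivAt X (f t) t) (c T : ℝ)
    (h : ∀ t ≤ T, c * X t ≤ f t) (s t : ℝ) (hst : s ≤ t) (htT : t ≤ T) :
    X s ≤ X t * Real.exp (c * (s - t)) := by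
  have hY : ∀ r, HasDerivAt (fun r => X r * Real.exp (-c * r))
      (f r * Real.exp (-c * r) + X r * (Real.exp (-c * r) * (-c * 1))) r := fun r =>
    (hX r).mul (((hasDerivAt_id r).const_mul (-c)).exp)
  have hm : MonotoneOn (fun r => X r * Real.exp (-c * r)) (Iic T) := by
    apply monotoneOn_of_deriv_nonneg (convex_Iic T)
    · exact fun r _ => (hY r).continuousAt.continuousWithinAt
    · exact fun r _ => (hY r).differentiableAt.differentiableWithinAt
    · intro r hr
      rw [interior_Iic] at hr
      rw [(hY r).deriv]
      have h1 := h r (le_of_lt hr)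
      have h2 := Real.exp_pos (-c * r)
      nlinarith
  have h1 := hm (show s ∈ Iic T from hst.trans htT) (show t ∈ Iic T from htT) hst
  simp only at h1
  have e1 : Real.exp (c * (s - t)) = Real.exp (-c * t) * Real.exp (c * s) := by
    rw [← Real.exp_add]; congr 1; ring
  have e2 : Real.exp (-c * s) * Real.exp (c * s) = 1 := by
    rw [← Real.exp_add]; simp
  calc X s = (X s * Real.exp (-c * s)) * Real.exp (c * s) := by rw [mul_assoc, e2, mul_one]
    _ ≤ (X t * Real.exp (-c * t)) * Real.exp (c * s) :=
        mul_le_mul_of_nonneg_right h1 (Real.exp_pos _).le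
    _ = _ := by rw [e1, mul_assoc]

lemma decay (X f : ℝ → ℝ) (hX : ∀ t, HasDerivAt X (f t) t) (hpos : ∀ t, 0 < X t)
    (c T q t1 : ℝ) (hc : 0 < c)
    (h : ∀ t ≤ T, X t ≤ q → c * X t ≤ f t) (ht1 : t1 ≤ T) (hq : X t1 ≤ q) :
    Tendsto X atBot (nhds 0) := by
  have hle : ∀ t ≤ t1, X t ≤ q := by
    intro t ht
    have hd : ∀ s, HasDerivAt (fun s => X (t1 - s)) (-(f (t1 - s))) s := fun s => by
      have := (hX (t1 - s)).comp s ((hasDerivAt_id s).const_sub t1)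
      simpa [Function.comp_def] using this
    have := image_le_of_deriv_right_lt_deriv_boundary' (f := fun s => X (t1 - s))
      (f' := fun s => -(f (t1 - s))) (a := 0) (b := t1 - t)
      (B := fun _ => q) (B' := fun _ => 0)
      (fun s _ => (hd s).continuousAt.continuousWithinAt)
      (fun s _ => (hd s).hasDerivWithinAt) (by simpa using hq)
      continuousOn_const (fun s _ => (hasDerivAt_const s q).hasDerivWithinAt)
      (fun s hs he => by
        have h1 := h (t1 - s) (by linarith [hs.1]) he.le
        have h2 := mul_pos hc (hpos (t1 - s))
        linarith)
    have h2 := this (x := t1 - t) ⟨by linarith, le_rfl⟩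
    simpa using h2
  have hexp := exp_compare X f hX c t1 (fun t ht => h t (ht.trans ht1) (hle t ht))
  have hlim : Tendsto (fun s => X t1 * Real.exp (c * (s - t1))) atBot (nhds 0) := by
    have h0 : Tendsto (fun s => c * (s - t1)) atBot atBot :=
      (tendsto_atBot_add_const_right _ (-t1) tendsto_id).const_mul_atBot hc
    simpa using (Real.tendsto_exp_atBot.comp h0).const_mul (X t1)
  refine tendsto_of_tendsto_of_tendsto_of_le_of_le' tendsto_const_nhds hlim
    (Eventually.of_forall fun s => (hpos s).le) ?_
  filter_upwards [eventually_le_atBot t1] with s hs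
  exact hexp s t1 hs le_rfl



set_option maxHeartbeats 4000000 in
/-- The α-limit set (as `λ → -∞`, in `[0,1]³`) of every interior orbit is contained in the union of the face `{Ω = 1}`, the line `L₁ = {(1,0,Ω₀) : Ω₀ ∈ (0,1)}` and the line `L₂ = {((3+2l)/(4+2l),0,Ω₀) : Ω₀ ∈ (0,1)}`. -/
theorem stmt7
    (l : ℝ) (hl : -1 < l)
    (σ σ' : ℝ → ℝ)
    (hσderiv : ∀ η : ℝ, 0 < η → HasDerivAt σ (σ' η) η)
    (hσ'cont : ContinuousOn σ' (Ioi 0))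
    (hσrange : ∀ η : ℝ, 0 < η → σ η ∈ Ioo 0 (1 / (3 + 2 * l)))
    (hσ0 : Tendsto σ (nhdsWithin 0 (Ioi 0)) (nhds 0))
    (k₁ k₂ : ℝ) (hk₁ : 0 < k₁) (hk₁₂ : k₁ < k₂)
    (hσ'near : ∃ η₀ > (0:ℝ), ∀ η ∈ Ioo (0:ℝ) η₀, σ' η ∈ Ioo k₁ k₂)
    (ω ω' : ℝ → ℝ)
    (hωsmooth : ContDiffOn ℝ (⊤ : ℕ∞) ω (Ioi 0))
    (hωderiv : ∀ η : ℝ, 0 < η → HasDerivAt ω (ω' η) η)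
    (hωpos : ∀ η : ℝ, 0 < η → 0 < ω η)
    (hωmono : StrictMonoOn ω (Ioi 0))
    (hω0 : Tendsto ω (nhdsWithin 0 (Ioi 0)) (nhds 0))
    (F : ℝ → ℝ) (hFdef : ∀ η : ℝ, 0 < η → F η = σ η * (ω' η / ω η))
    (Flo Fhi : ℝ) (hFlo : 0 < Flo)
    (hFbounds : ∀ η : ℝ, 0 < η → F η ∈ Icc Flo Fhi)
    (U V E Ω : ℝ → ℝ)
    (hΩdef : ∀ t : ℝ, Ω t = ω (E t) / (1 + ω (E t)))
    (hU : ∀ t : ℝ, U t ∈ Ioo (0:ℝ) 1) (hV : ∀ t : ℝ, V t ∈ Ioo (0:ℝ) 1)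
    (hE : ∀ t : ℝ, 0 < E t) (hEcont : Continuous E)
    (hUode : ∀ t : ℝ, HasDerivAt U
      (U t * (1 - U t) * ((3 + 2 * l - (4 + 2 * l) * U t) * (1 - V t)
        - (1 + σ (E t) - σ' (E t)) * ((1 - U t + σ (E t) * U t) * V t))) t)
    (hVode : ∀ t : ℝ, HasDerivAt V
      (V t * (1 - V t) * ((2 * U t - 1) * (1 - V t + 2 * σ (E t) * V t)
        + σ' (E t) * ((1 - U t + σ (E t) * U t) * V t))) t)
    (hΩode : ∀ t : ℝ, HasDerivAt Ω
      (-(Ω t * (1 - Ω t) * F (E t) * ((1 - U t + σ (E t) * U t) * V t))) t) :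
    ∀ p : ℝ × ℝ × ℝ,
      (∃ tn : ℕ → ℝ, Tendsto tn atTop atBot ∧
        Tendsto (fun j => (U (tn j), V (tn j), Ω (tn j))) atTop (nhds p)) →
      p.2.2 = 1 ∨
      (p.1 = 1 ∧ p.2.1 = 0 ∧ p.2.2 ∈ Ioo (0:ℝ) 1) ∨
      (p.1 = (3 + 2 * l) / (4 + 2 * l) ∧ p.2.1 = 0 ∧ p.2.2 ∈ Ioo (0:ℝ) 1) := by
  rintro ⟨p1, p2, p3⟩ ⟨tn, htn, hp⟩
  simp only
  have hp1 : Tendsto (fun j => U (tn j)) atTop (nhds p1) := (continuous_fst.tendsto _).comp hp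
  have hp23 : Tendsto (fun j => (V (tn j), Ω (tn j))) atTop (nhds (p2, p3)) :=
    (continuous_snd.tendsto _).comp hp
  have hp2 : Tendsto (fun j => V (tn j)) atTop (nhds p2) := (continuous_fst.tendsto _).comp hp23
  have hp3 : Tendsto (fun j => Ω (tn j)) atTop (nhds p3) := (continuous_snd.tendsto _).comp hp23
  by_cases h31 : p3 = 1
  · exact Or.inl h31
  right
  -- basic bounds
  obtain ⟨A, hA⟩ : ∃ A, A = 3 + 2 * l := ⟨_, rfl⟩
  have hA1 : 1 < A := by linarith
  have hA4 : 4 + 2 * l = A + 1 := by linarith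
  have hσ1 : ∀ η, 0 < η → 0 < σ η ∧ σ η < 1 := by
    intro η hη
    have h := hσrange η hη
    refine ⟨h.1, h.2.trans ?_⟩
    rw [← hA, div_lt_one (by linarith)]; exact hA1
  have hΩ01 : ∀ t, 0 < Ω t ∧ Ω t < 1 := by
    intro t
    have h := hωpos _ (hE t)
    rw [hΩdef]
    exact ⟨by positivity, by rw [div_lt_one (by linarith)]; linarith⟩
  have hP : ∀ t, σ (E t) ≤ 1 - U t + σ (E t) * U t ∧ 1 - U t + σ (E t) * U t ≤ 1 := by
    intro t
    have h1 := hU t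
    have h2 := hσ1 _ (hE t)
    constructor <;> nlinarith [h1.1, h1.2, h2.1, h2.2]
  have hP0 : ∀ t, 0 < 1 - U t + σ (E t) * U t := fun t =>
    lt_of_lt_of_le (hσ1 _ (hE t)).1 (hP t).1
  have hF0 : ∀ t, 0 < F (E t) := fun t => lt_of_lt_of_le hFlo (hFbounds _ (hE t)).1
  have hΩanti : Antitone Ω := by
    apply antitone_of_deriv_nonpos (fun t => (hΩode t).differentiableAt)
    intro t
    rw [(hΩode t).deriv]
    have h1 := (hΩ01 t).1
    have h2 : 0 < 1 - Ω t := by linarith [(hΩ01 t).2]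
    have h3 := hF0 t
    have h4 := hP0 t
    have h5 := (hV t).1
    have : 0 < Ω t * (1 - Ω t) * F (E t) * ((1 - U t + σ (E t) * U t) * V t) := by positivity
    linarith
  have hΩle : ∀ t, Ω t ≤ p3 := by
    intro t
    refine ge_of_tendsto hp3 ?_
    filter_upwards [htn.eventually_le_atBot t] with j hj
    exact hΩanti hj
  have hp3pos : 0 < p3 := lt_of_lt_of_le (hΩ01 0).1 (hΩle 0)
  have hp3lt : p3 < 1 := lt_of_le_of_ne
    (le_of_tendsto hp3 (Eventually.of_forall fun j => (hΩ01 _).2.le)) h31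
  have hΩlim : Tendsto Ω atBot (nhds p3) := by
    rw [tendsto_order]
    constructor
    · intro a ha
      obtain ⟨j, hj⟩ := ((tendsto_order.1 hp3).1 a ha).exists
      filter_upwards [eventually_le_atBot (tn j)] with s hs
      exact lt_of_lt_of_le hj (hΩanti hs)
    · intro a ha
      exact Eventually.of_forall fun s => lt_of_le_of_lt (hΩle s) ha
  -- E bounded
  have hωE : ∀ t, ω (E t) = Ω t / (1 - Ω t) := by
    intro t
    have h := hωpos _ (hE t)
    rw [hΩdef]
    field_simp
    ring
  have hElow : ∀ t ≤ 0, E 0 ≤ E t := by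
    intro t ht
    by_contra hc
    push Not at hc
    have h1 := hωmono (hE t) (hE 0) hc
    rw [hωE, hωE, div_lt_div_iff₀ (by linarith [(hΩ01 t).2]) (by linarith [(hΩ01 0).2])] at h1
    have h2 := hΩanti ht
    nlinarith
  have hEup : ∃ b, ∀ t ≤ 0, E t ≤ b := by
    refine ⟨E 0 + (Real.log (p3 / (1 - p3)) - Real.log (ω (E 0))) / Flo, fun t ht => ?_⟩
    have hlogd : ∀ η, 0 < η → HasDerivAt (fun η => Real.log (ω η)) (ω' η / ω η) η := fun η hη =>
      (hωderiv η hη).log (hωpos η hη).ne'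
    have hge : ∀ η, 0 < η → Flo ≤ ω' η / ω η := by
      intro η hη
      have h1 := (hFbounds η hη).1
      rw [hFdef η hη] at h1
      have h2 := hσ1 η hη
      have h3 : 0 < ω' η / ω η := by
        by_contra hc
        push Not at hc
        nlinarith
      nlinarith
    have h1 := (convex_Ioi (0:ℝ)).mul_sub_le_image_sub_of_le_deriv
      (f := fun η => Real.log (ω η)) (C := Flo)
      (fun η hη => (hlogd η hη).continuousAt.continuousWithinAt)
      (fun η hη => (hlogd η (interior_subset hη)).differentiableAt.differentiableWithinAt)
      (fun η hη => by rw [(hlogd η (interior_subset hη)).deriv]; exact hge η (interior_subset hη))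
      (E 0) (hE 0) (E t) (hE t) (hElow t ht)
    have h2 : Real.log (ω (E t)) ≤ Real.log (p3 / (1 - p3)) := by
      apply Real.log_le_log (hωpos _ (hE t))
      rw [hωE, div_le_div_iff₀ (by linarith [(hΩ01 t).2]) (by linarith)]
      have := hΩle t
      nlinarith
    rw [← sub_le_iff_le_add', le_div_iff₀ hFlo]
    linarith
  obtain ⟨b, hb⟩ := hEup
  have hEmem : ∀ t ≤ 0, E t ∈ Icc (E 0) b := fun t ht => ⟨hElow t ht, hb t ht⟩
  have hsub : Icc (E 0) b ⊆ Ioi 0 := fun x hx => lt_of_lt_of_le (hE 0) hx.1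
  obtain ⟨K, hK⟩ := (isCompact_Icc (a := E 0) (b := b)).exists_bound_of_continuousOn
    (hσ'cont.mono hsub)
  have hK' : ∀ t ≤ 0, |σ' (E t)| ≤ K := fun t ht => hK _ (hEmem t ht)
  have hK0 : 0 ≤ K := (abs_nonneg _).trans (hK' 0 le_rfl)
  obtain ⟨x0, hx0, hx0min⟩ := (isCompact_Icc (a := E 0) (b := b)).exists_isMinOn
    ⟨_, hEmem 0 le_rfl⟩
    (f := σ) (fun x hx => (hσderiv x (hsub hx)).continuousAt.continuousWithinAt)
  have hs0 : 0 < σ x0 := (hσ1 _ (hsub hx0)).1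
  have hs0le : ∀ t ≤ 0, σ x0 ≤ σ (E t) := fun t ht => hx0min (hEmem t ht)
  have hH : ∀ t ≤ 0, |σ' (E t) * ((1 - U t + σ (E t) * U t) * V t)| ≤ K * V t := by
    intro t ht
    have h1 := hK' t ht
    have h2 := hP t
    have h3 := hP0 t
    have h4 := (hV t).1
    rw [abs_mul, abs_of_pos (mul_pos h3 h4)]
    apply mul_le_mul h1 _ (by positivity) hK0
    nlinarith
  -- V → 0
  have hVlow : ∀ t ≤ 0, -(3 + K) * V t ≤ (V t * (1 - V t) * ((2 * U t - 1) *
      (1 - V t + 2 * σ (E t) * V t) + σ' (E t) * ((1 - U t + σ (E t) * U t) * V t))) := by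
    intro t ht
    have h1 := abs_le.1 (hH t ht)
    obtain ⟨hv0, hv1⟩ := hV t
    obtain ⟨hu0, hu1⟩ := hU t
    obtain ⟨hs, hs1⟩ := hσ1 _ (hE t)
    have h2 : 0 < 1 - V t + 2 * σ (E t) * V t := by nlinarith [mul_pos hs hv0]
    have h3 : 1 - V t + 2 * σ (E t) * V t ≤ 3 := by nlinarith [mul_pos hs hv0]
    have h4 : -3 ≤ (2 * U t - 1) * (1 - V t + 2 * σ (E t) * V t) := by nlinarith
    have h5 : -K ≤ σ' (E t) * ((1 - U t + σ (E t) * U t) * V t) := by nlinarith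
    generalize (2 * U t - 1) * (1 - V t + 2 * σ (E t) * V t) = a at *
    generalize σ' (E t) * ((1 - U t + σ (E t) * U t) * V t) = d at *
    have h6 : -(3 + K) ≤ (1 - V t) * (a + d) := by
      have : (1 - V t) * (-(3 + K)) ≤ (1 - V t) * (a + d) :=
        mul_le_mul_of_nonneg_left (by linarith) (by linarith)
      nlinarith
    have := mul_le_mul_of_nonneg_left h6 hv0.le
    linarith
  have hVexp := exp_compare V _ hVode (-(3 + K)) 0 hVlow
  have hVlim : Tendsto V atBot (nhds 0) := by
    set c0 := Ω 0 * (1 - p3) * Flo * (σ x0) with hc0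
    have hc0pos : 0 < c0 := by
      have := (hΩ01 0).1
      have : 0 < 1 - p3 := by linarith
      positivity
    have hub : ∀ t ≤ -1, V t ≤ (Ω t - Ω (t + 1)) / c0 * Real.exp (3 + K) := by
      intro t ht
      obtain ⟨ξ, hξ, hξe⟩ := exists_hasDerivAt_eq_slope Ω _ (show t < t + 1 by linarith)
        (fun s _ => (hΩode s).continuousAt.continuousWithinAt) (fun s _ => hΩode s)
      have hξ0 : ξ ≤ 0 := by linarith [hξ.2]
      have h1 : c0 * V ξ ≤ Ω t - Ω (t + 1) := by
        have e : Ω t - Ω (t + 1) =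
            Ω ξ * (1 - Ω ξ) * F (E ξ) * ((1 - U ξ + σ (E ξ) * U ξ) * V ξ) := by
          rw [show t + 1 - t = 1 by ring, div_one] at hξe
          linarith
        rw [e, hc0, ← mul_assoc]
        have hv := (hV ξ).1
        have a1 := hΩanti hξ0
        have a2 : 1 - p3 ≤ 1 - Ω ξ := by linarith [hΩle ξ]
        have a3 := (hFbounds _ (hE ξ)).1
        have a4 := (hs0le ξ hξ0).trans (hP ξ).1
        have b1 := (hΩ01 0).1
        have b2 : 0 < 1 - p3 := by linarith
        have b3 := (hΩ01 ξ).1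
        have b4 : 0 < 1 - Ω ξ := by linarith
        have b5 := hF0 ξ
        gcongr
      have h2 := hVexp t ξ hξ.1.le hξ0
      have h3 : Real.exp (-(3 + K) * (t - ξ)) ≤ Real.exp (3 + K) := by
        apply Real.exp_le_exp.2
        nlinarith [hξ.1, hξ.2]
      have h4 : V ξ ≤ (Ω t - Ω (t + 1)) / c0 := by
        rw [le_div_iff₀ hc0pos]; linarith
      calc V t ≤ V ξ * Real.exp (-(3 + K) * (t - ξ)) := h2
        _ ≤ V ξ * Real.exp (3 + K) := mul_le_mul_of_nonneg_left h3 (hV ξ).1.le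
        _ ≤ _ := mul_le_mul_of_nonneg_right h4 (Real.exp_pos _).le
    have hlim : Tendsto (fun t => (Ω t - Ω (t + 1)) / c0 * Real.exp (3 + K)) atBot (nhds 0) := by
      have h1 : Tendsto (fun t => Ω (t + 1)) atBot (nhds p3) :=
        hΩlim.comp (tendsto_atBot_add_const_right _ 1 tendsto_id)
      simpa using ((hΩlim.sub h1).div_const c0).mul_const (Real.exp (3 + K))
    refine tendsto_of_tendsto_of_tendsto_of_le_of_le' tendsto_const_nhds hlim
      (Eventually.of_forall fun s => (hV s).1.le) ?_
    filter_upwards [eventually_le_atBot (-1 : ℝ)] with s hs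
    exact hub s hs
  have hp20 : p2 = 0 := tendsto_nhds_unique hp2 (hVlim.comp htn)
  -- U bracket
  have hbr : ∀ t ≤ 0, |((3 + 2 * l - (4 + 2 * l) * U t) * (1 - V t)
        - (1 + σ (E t) - σ' (E t)) * ((1 - U t + σ (E t) * U t) * V t))
        - (A - (A + 1) * U t)| ≤ (A + 3 + K) * V t := by
    intro t ht
    have h1 := abs_le.1 (hH t ht)
    obtain ⟨hv0, hv1⟩ := hV t
    obtain ⟨hu0, hu1⟩ := hU t
    obtain ⟨hs, hs1⟩ := hσ1 _ (hE t)
    have h2 : 0 < (1 - U t + σ (E t) * U t) * V t := mul_pos (hP0 t) hv0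
    have h3 : (1 - U t + σ (E t) * U t) * V t ≤ V t := by nlinarith [(hP t).2]
    rw [hA4, ← hA]
    generalize (1 - U t + σ (E t) * U t) * V t = h at *
    have h4 : (1 + σ (E t)) * h ≤ 2 * V t := by nlinarith
    have h5 : 0 ≤ (1 + σ (E t)) * h := by positivity
    have h6 : (A + 1) * U t * V t ≤ (A + 1) * V t := by
      have : 0 ≤ (A + 1) * V t := by positivity
      nlinarith
    have h7 : 0 ≤ (A + 1) * U t * V t := by positivity
    have h8 : 0 < A * V t := by positivity
    have e : (A - (A + 1) * U t) * (1 - V t) - (1 + σ (E t) - σ' (E t)) * h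
        - (A - (A + 1) * U t) = -(A * V t) + (A + 1) * U t * V t - (1 + σ (E t)) * h
          + σ' (E t) * h := by ring
    rw [e, abs_le]
    constructor <;> nlinarith
  have hsmall : ∀ ε > 0, ∀ᶠ t in atBot, t ≤ 0 ∧ (A + 3 + K) * V t ≤ ε := by
    intro ε hε
    have h1 : Tendsto (fun t => (A + 3 + K) * V t) atBot (nhds 0) := by
      simpa using hVlim.const_mul (A + 3 + K)
    filter_upwards [eventually_le_atBot (0:ℝ), (tendsto_order.1 h1).2 ε hε] with t h2 h3
    exact ⟨h2, h3.le⟩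
  have hp3mem : p3 ∈ Ioo (0:ℝ) 1 := ⟨hp3pos, hp3lt⟩
  rw [hA4, ← hA]
  rcases lt_trichotomy p1 (A / (A + 1)) with hlt | heq | hgt
  · exfalso
    obtain ⟨q, hq1, hq2⟩ := exists_between hlt
    have hq3 : 0 < A - (A + 1) * q := by
      rw [lt_div_iff₀ (by linarith)] at hq2; linarith
    have hq4 : q < 1 := hq2.trans (by rw [div_lt_one (by linarith)]; linarith)
    obtain ⟨T, hT⟩ := eventually_atBot.1 (hsmall ((A - (A + 1) * q) / 2) (by linarith))
    obtain ⟨j, hj1, hj2⟩ := ((htn.eventually_le_atBot T).and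
      ((tendsto_order.1 hp1).2 q hq1)).exists
    have hU0 : Tendsto U atBot (nhds 0) := by
      refine decay U _ hUode (fun t => (hU t).1) ((1 - q) * ((A - (A + 1) * q) / 2)) T q (tn j)
        (mul_pos (by linarith) (by linarith)) ?_ hj1 hj2.le
      intro t ht hUq
      have h1 := abs_le.1 (hbr t (hT t ht).1)
      have h2 := (hT t ht).2
      obtain ⟨hu0, hu1⟩ := hU t
      generalize ((3 + 2 * l - (4 + 2 * l) * U t) * (1 - V t)
        - (1 + σ (E t) - σ' (E t)) * ((1 - U t + σ (E t) * U t) * V t)) = B at *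
      have h3 : (A - (A + 1) * q) / 2 ≤ B := by nlinarith
      have h4 : (1 - q) * ((A - (A + 1) * q) / 2) ≤ (1 - U t) * B :=
        mul_le_mul (by linarith) h3 (by linarith) (by linarith)
      nlinarith
    have hev : ∀ᶠ t in atBot, t ≤ 0 ∧ U t ≤ 1/4 ∧ (1 + K) * V t ≤ 1/4 := by
      have h1 : Tendsto (fun t => (1 + K) * V t) atBot (nhds 0) := by
        simpa using hVlim.const_mul (1 + K)
      filter_upwards [eventually_le_atBot (0:ℝ), (tendsto_order.1 hU0).2 (1/4) (by norm_num),
        (tendsto_order.1 h1).2 (1/4) (by norm_num)] with t h2 h3 h4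
      exact ⟨h2, h3.le, h4.le⟩
    obtain ⟨T2, hT2⟩ := eventually_atBot.1 hev
    have hcmp := exp_compare (fun t => -V t) _ (fun t => (hVode t).neg) 0 T2 (by
      intro t ht
      obtain ⟨h1, h2, h3⟩ := hT2 t ht
      have h4 := abs_le.1 (hH t h1)
      obtain ⟨hv0, hv1⟩ := hV t
      obtain ⟨hs, hs1⟩ := hσ1 _ (hE t)
      have h5 : 1 - V t ≤ 1 - V t + 2 * σ (E t) * V t := by nlinarith [mul_pos hs hv0]
      have h6 : (2 * U t - 1) * (1 - V t + 2 * σ (E t) * V t) ≤ -(1/2) * (1 - V t) := by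
        have g1 := mul_le_mul_of_nonneg_right (show 2 * U t - 1 ≤ -(1/2) by linarith)
          (show 0 ≤ 1 - V t + 2 * σ (E t) * V t by linarith)
        linarith
      have h7 : (2 * U t - 1) * (1 - V t + 2 * σ (E t) * V t)
        + σ' (E t) * ((1 - U t + σ (E t) * U t) * V t) ≤ 0 := by linarith [h4.2]
      have h8 : 0 ≤ V t * (1 - V t) := mul_nonneg hv0.le (by linarith)
      have := mul_nonpos_of_nonneg_of_nonpos h8 h7
      linarith)
    have hge : ∀ᶠ t in atBot, V T2 ≤ V t := by
      filter_upwards [eventually_le_atBot T2] with t ht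
      have := hcmp t T2 ht le_rfl
      simp at this
      exact this
    have := ge_of_tendsto hVlim hge
    linarith [(hV T2).1]
  · exact Or.inr ⟨heq, hp20, hp3mem⟩
  · refine Or.inl ⟨?_, hp20, hp3mem⟩
    obtain ⟨q, hq1, hq2⟩ := exists_between hgt
    have hq3 : 0 < (A + 1) * q - A := by
      rw [div_lt_iff₀ (by linarith)] at hq1; linarith
    have hq4 : 0 < q := lt_trans (by positivity) hq1
    obtain ⟨T, hT⟩ := eventually_atBot.1 (hsmall (((A + 1) * q - A) / 2) (by linarith))
    obtain ⟨j, hj1, hj2⟩ := ((htn.eventually_le_atBot T).and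
      ((tendsto_order.1 hp1).1 q hq2)).exists
    have hU0 : Tendsto (fun t => 1 - U t) atBot (nhds 0) := by
      refine decay (fun t => 1 - U t) _ (fun t => (hUode t).const_sub 1)
        (fun t => by linarith [(hU t).2]) (q * (((A + 1) * q - A) / 2)) T (1 - q) (tn j)
        (mul_pos (by linarith) (by linarith)) ?_ hj1 (by linarith)
      intro t ht hUq
      have h1 := abs_le.1 (hbr t (hT t ht).1)
      have h2 := (hT t ht).2
      obtain ⟨hu0, hu1⟩ := hU t
      generalize ((3 + 2 * l - (4 + 2 * l) * U t) * (1 - V t)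
        - (1 + σ (E t) - σ' (E t)) * ((1 - U t + σ (E t) * U t) * V t)) = B at *
      have hUq' : q ≤ U t := by linarith
      have h3 : ((A + 1) * q - A) / 2 ≤ -B := by nlinarith
      have h4 : q * (((A + 1) * q - A) / 2) ≤ U t * (-B) :=
        mul_le_mul hUq' h3 (by linarith) (by linarith)
      have h5 := mul_le_mul_of_nonneg_right h4 (show 0 ≤ 1 - U t by linarith)
      linarith
    have h6 : Tendsto (fun j => 1 - U (tn j)) atTop (nhds (1 - p1)) := hp1.const_sub 1
    have := tendsto_nhds_unique h6 (hU0.comp htn)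
    linarith
end

section
/- Let k ≥ 0 be an integer and let φ: (0,1) → [0,∞) be C^k such that |(1−ℰ)^k φ^{(k)}(ℰ)| ≤ C(1−ℰ)^{−1+ε} for some constants C, ε > 0 for all ℰ in a neighborhood of 1. For i > −1 and η > 0 define g_i(η) = ∫_{e^{−η}}^{1} φ(ℰ)·[(ℰ² − e^{−2η})/2]^i dℰ. Then: (i) for every i ≥ 0, g_i is C^{k+1} on (0,∞), with g_i'(η) = i·e^{−2η}·g_{i−1}(η) when i > 0 and g_0'(η) = e^{−η}·φ(e^{−η}); (ii) for −1 < i < 0, g_i is C^k on (0,∞), and if in addition the function ℰ ↦ (1−ℰ)^k φ^{(k)}(ℰ) is Hölder continuous on (0,1) with exponent α > −i, then g_i is C^{k+1} on (0,∞). -/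
open Filter Set

/-- The kinetic integrals `g_i(η) = ∫_{e^{-η}}^1 φ(ℰ) [(ℰ² - e^{-2η})/2]^i dℰ`. -/
noncomputable def gfun (φ : ℝ → ℝ) (i η : ℝ) : ℝ :=
  ∫ E in Real.exp (-η)..1, φ E * (((E ^ 2 - Real.exp (-2 * η)) / 2) ^ i)

open MeasureTheory Topology

noncomputable def HT (i : ℝ) (F : ℝ → ℝ) (u : ℝ) : ℝ := ∫ t in (0:ℝ)..1, F (u + t) * t ^ i

lemma loc_bound {F : ℝ → ℝ} (hF : Continuous F) (u0 : ℝ) :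
    ∃ M : ℝ, 0 ≤ M ∧ ∀ x ∈ Icc (u0 - 1) (u0 + 2), |F x| ≤ M := by
  obtain ⟨M, hM⟩ := (isCompact_Icc (a := u0 - 1) (b := u0 + 2)).exists_bound_of_continuousOn
    hF.continuousOn
  refine ⟨|M|, abs_nonneg _, fun x hx => ?_⟩
  exact (hM x hx).trans (le_abs_self _)

lemma meas_rpow (i : ℝ) : Measurable (fun t : ℝ => t ^ i) := by
  exact measurable_id.pow_const i

lemma mem_shift {u0 u t : ℝ} (hu : u ∈ Metric.ball u0 1) (ht : t ∈ uIoc (0:ℝ) 1) :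
    u + t ∈ Icc (u0 - 1) (u0 + 2) := by
  rw [Metric.mem_ball, Real.dist_eq, abs_lt] at hu
  rw [uIoc_of_le zero_le_one] at ht
  constructor <;> linarith [hu.1, hu.2, ht.1, ht.2]

lemma HT_bound {F : ℝ → ℝ} {u0 M : ℝ} (hM : ∀ x ∈ Icc (u0 - 1) (u0 + 2), |F x| ≤ M) (i : ℝ)
    {u t : ℝ} (hu : u ∈ Metric.ball u0 1) (ht : t ∈ uIoc (0:ℝ) 1) :
    ‖F (u + t) * t ^ i‖ ≤ M * t ^ i := by
  have h1 := hM _ (mem_shift hu ht)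
  rw [uIoc_of_le zero_le_one] at ht
  have h2 : 0 ≤ t ^ i := Real.rpow_nonneg ht.1.le i
  rw [norm_mul, Real.norm_eq_abs, Real.norm_eq_abs, abs_of_nonneg h2]
  exact mul_le_mul_of_nonneg_right h1 h2

lemma HT_meas {F : ℝ → ℝ} (hF : Continuous F) (i u : ℝ) (s : Set ℝ) :
    AEStronglyMeasurable (fun t => F (u + t) * t ^ i) (volume.restrict s) := by
  have : Measurable (fun t => F (u + t) * t ^ i) :=
    (hF.measurable.comp (measurable_const.add measurable_id)).mul (meas_rpow i)
  exact this.aestronglyMeasurable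

lemma HT_int {F : ℝ → ℝ} (hF : Continuous F) {i : ℝ} (hi : -1 < i) (u : ℝ) :
    IntervalIntegrable (fun t => F (u + t) * t ^ i) volume 0 1 := by
  refine (intervalIntegral.intervalIntegrable_rpow' hi).continuousOn_mul ?_
  exact (hF.comp (continuous_const.add continuous_id)).continuousOn

lemma HT_cont {F : ℝ → ℝ} (hF : Continuous F) {i : ℝ} (hi : -1 < i) : Continuous (HT i F) := by
  rw [continuous_iff_continuousAt]
  intro u0
  obtain ⟨M, hM0, hM⟩ := loc_bound hF u0
  refine intervalIntegral.continuousAt_of_dominated_interval (bound := fun t => M * t ^ i) ?_ ?_ ?_ ?_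
  · exact Eventually.of_forall fun u => HT_meas hF i u _
  · filter_upwards [Metric.ball_mem_nhds u0 one_pos] with u hu
    exact Eventually.of_forall fun t ht => HT_bound hM i hu ht
  · exact (intervalIntegral.intervalIntegrable_rpow' hi).const_mul M
  · refine Eventually.of_forall fun t ht => ?_
    exact ((hF.comp (continuous_id.add continuous_const)).mul continuous_const).continuousAt

lemma HT_deriv {F F' : ℝ → ℝ} (hF' : Continuous F') (hd : ∀ x, HasDerivAt F (F' x) x) {i : ℝ}
    (hi : -1 < i) (u0 : ℝ) : HasDerivAt (HT i F) (HT i F' u0) u0 := by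
  have hF : Continuous F := continuous_iff_continuousAt.2 fun x => (hd x).continuousAt
  obtain ⟨M, hM0, hM⟩ := loc_bound hF' u0
  refine (intervalIntegral.hasDerivAt_integral_of_dominated_loc_of_deriv_le
    (bound := fun t => M * t ^ i) (s := Metric.ball u0 1)
    (F := fun u t => F (u + t) * t ^ i) (F' := fun u t => F' (u + t) * t ^ i)
    (Metric.ball_mem_nhds u0 one_pos) ?_ ?_ ?_ ?_ ?_ ?_).2
  · exact Eventually.of_forall fun u => HT_meas hF i u _
  · exact HT_int hF hi u0
  · exact HT_meas hF' i u0 _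
  · exact Eventually.of_forall fun t ht u hu => HT_bound hM i hu ht
  · exact (intervalIntegral.intervalIntegrable_rpow' hi).const_mul M
  · refine Eventually.of_forall fun t ht u hu => ?_
    exact ((hd (u + t)).comp_add_const u t).mul_const _

lemma HT_contDiff {i : ℝ} (hi : -1 < i) (k : ℕ) : ∀ {F : ℝ → ℝ}, ContDiff ℝ k F →
    ContDiff ℝ k (HT i F) := by
  induction k with
  | zero => intro F hF; exact contDiff_zero.2 (HT_cont (contDiff_zero.1 hF) hi)
  | succ k ih =>
    intro F hF
    have h := (contDiff_succ_iff_deriv (n := (k : WithTop ℕ∞))).1 (by exact_mod_cast hF)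
    have hd : ∀ u, HasDerivAt (HT i F) (HT i (deriv F) u) u :=
      HT_deriv h.2.2.continuous (fun x => (h.1 x).hasDerivAt) hi
    have : ContDiff ℝ ((k : WithTop ℕ∞) + 1) (HT i F) := by
      refine contDiff_succ_iff_deriv.2 ⟨fun u => (hd u).differentiableAt, fun h => by simp at h, ?_⟩
      rw [show deriv (HT i F) = HT i (deriv F) from funext fun u => (hd u).deriv]
      exact ih h.2.2
    exact_mod_cast this

/-- The Marchaud derivative. -/
noncomputable def MD (i : ℝ) (F : ℝ → ℝ) (u : ℝ) : ℝ :=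
  (F (u + 1) - F u) - i * ∫ t in (0:ℝ)..1, (F (u + t) - F u) * t ^ (i - 1)

lemma MD_meas {F : ℝ → ℝ} (hF : Continuous F) (i u : ℝ) (s : Set ℝ) :
    AEStronglyMeasurable (fun t => (F (u + t) - F u) * t ^ i) (volume.restrict s) := by
  have : Measurable (fun t => (F (u + t) - F u) * t ^ i) :=
    ((hF.measurable.comp (measurable_const.add measurable_id)).sub measurable_const).mul
      (meas_rpow i)
  exact this.aestronglyMeasurable

lemma MD_bound {F : ℝ → ℝ} {C α i u t : ℝ} (hC : |F (u + t) - F u| ≤ C * t ^ α)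
    (ht : t ∈ uIoc (0:ℝ) 1) :
    ‖(F (u + t) - F u) * t ^ (i - 1)‖ ≤ C * t ^ (α + (i - 1)) := by
  rw [uIoc_of_le zero_le_one] at ht
  have h2 : 0 ≤ t ^ (i - 1) := Real.rpow_nonneg ht.1.le _
  rw [norm_mul, Real.norm_eq_abs, Real.norm_eq_abs, abs_of_nonneg h2, Real.rpow_add ht.1, ← mul_assoc]
  exact mul_le_mul_of_nonneg_right hC h2

lemma MD_cont {F : ℝ → ℝ} (hF : Continuous F) {i α C r u0 : ℝ} (hr : 0 < r) (hαi : 0 < α + i)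
    (hC : ∀ u ∈ Metric.ball u0 r, ∀ t ∈ uIoc (0:ℝ) 1, |F (u + t) - F u| ≤ C * t ^ α) :
    ContinuousAt (MD i F) u0 := by
  refine ContinuousAt.sub (by fun_prop) (ContinuousAt.mul continuousAt_const ?_)
  refine intervalIntegral.continuousAt_of_dominated_interval
    (bound := fun t => C * t ^ (α + (i - 1))) ?_ ?_ ?_ ?_
  · exact Eventually.of_forall fun u => MD_meas hF _ u _
  · filter_upwards [Metric.ball_mem_nhds u0 hr] with u hu
    exact Eventually.of_forall fun t ht => MD_bound (hC u hu t ht) ht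
  · exact (intervalIntegral.intervalIntegrable_rpow' (by linarith)).const_mul C
  · refine Eventually.of_forall fun t ht => ?_
    have : Continuous fun x => (F (x + t) - F x) * t ^ (i - 1) := by fun_prop
    exact this.continuousAt

lemma HT_parts {F P : ℝ → ℝ} (hF : Continuous F) (hP : ∀ x, HasDerivAt P (F x) x) {i : ℝ}
    (hi : -1 < i) (u : ℝ) : HT i F u = MD i P u ∧
      IntervalIntegrable (fun t => (P (u + t) - P u) * t ^ (i - 1)) volume 0 1 := by
  have hPc : Continuous P := continuous_iff_continuousAt.2 fun x => (hP x).continuousAt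
  obtain ⟨M, hM0, hM⟩ := loc_bound hF u
  have hlip : ∀ t ∈ Icc (0:ℝ) 1, |P (u + t) - P u| ≤ M * t := by
    intro t ht
    have := (convex_Icc (u - 1) (u + 2)).norm_image_sub_le_of_norm_hasDerivWithin_le
      (f := P) (f' := F) (C := M) (x := u) (y := u + t)
      (fun x _ => (hP x).hasDerivWithinAt) (fun x hx => hM x hx)
      ⟨by linarith, by linarith⟩ ⟨by linarith [ht.1], by linarith [ht.2]⟩
    simpa [abs_of_nonneg ht.1] using this
  have hint : IntervalIntegrable (fun t => (P (u + t) - P u) * t ^ (i - 1)) volume 0 1 := by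
    refine IntervalIntegrable.mono_fun' (g := fun t => M * t ^ (1 + (i - 1)))
      ((intervalIntegral.intervalIntegrable_rpow' (by linarith)).const_mul M)
      (MD_meas hPc _ u _) ?_
    refine (ae_restrict_iff' measurableSet_uIoc).2 (Eventually.of_forall fun t ht => ?_)
    refine MD_bound ?_ ht
    rw [Real.rpow_one]
    rw [uIoc_of_le zero_le_one] at ht
    exact hlip t ⟨ht.1.le, ht.2⟩
  refine ⟨?_, hint⟩
  have hFi := HT_int hF hi u
  have key := intervalIntegral.integral_eq_sub_of_hasDerivAt_of_le (a := 0) (b := 1)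
    (f := fun t => (P (u + t) - P u) * t ^ i)
    (f' := fun t => F (u + t) * t ^ i + i * ((P (u + t) - P u) * t ^ (i - 1))) zero_le_one ?_ ?_
    (hFi.add (hint.const_mul i))
  · rw [intervalIntegral.integral_add hFi (hint.const_mul i),
      intervalIntegral.integral_const_mul] at key
    simp at key
    unfold HT MD
    linarith
  · intro t ht
    rcases eq_or_lt_of_le ht.1 with h0 | h0
    · subst h0
      have : Tendsto (fun t : ℝ => M * t ^ (1 + i)) (𝓝[Icc 0 1] 0) (𝓝 0) := by
        have : Continuous fun t : ℝ => M * t ^ (1 + i) :=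
          continuous_const.mul (Real.continuous_rpow_const (by linarith))
        have h := this.tendsto 0
        simp only [Real.zero_rpow (show 1 + i ≠ 0 by linarith), mul_zero] at h
        exact h.mono_left nhdsWithin_le_nhds
      unfold ContinuousWithinAt
      simp only [add_zero, sub_self, zero_mul]
      refine squeeze_zero_norm' ?_ this
      filter_upwards [self_mem_nhdsWithin] with t ht
      rcases eq_or_lt_of_le ht.1 with h0 | h0
      · rw [← h0]; simp [Real.zero_rpow (show 1 + i ≠ 0 by linarith)]
      · rw [norm_mul, Real.norm_eq_abs, Real.norm_eq_abs, abs_of_nonneg (Real.rpow_nonneg ht.1 i),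
          Real.rpow_add h0, Real.rpow_one, ← mul_assoc]
        exact mul_le_mul_of_nonneg_right (hlip t ht) (Real.rpow_nonneg ht.1 i)
    · refine ContinuousAt.continuousWithinAt (ContinuousAt.mul (by fun_prop) ?_)
      exact Real.continuousAt_rpow_const _ _ (Or.inl h0.ne')
  · intro t ht
    have h1 : HasDerivAt (fun t => P (u + t) - P u) (F (u + t)) t :=
      ((hP (u + t)).comp_const_add u t).sub_const _
    have h2 := h1.mul (Real.hasDerivAt_rpow_const (x := t) (p := i) (Or.inl ht.1.ne'))
    refine h2.congr_deriv ?_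
    change F (u + t) * t ^ i + (P (u + t) - P u) * (i * t ^ (i - 1)) =
      F (u + t) * t ^ i + i * ((P (u + t) - P u) * t ^ (i - 1))
    ring

lemma HT_marchaud {F : ℝ → ℝ} (hF : Continuous F) {i α C r u0 : ℝ} (hi : -1 < i) (hr : 0 < r)
    (hαi : 0 < α + i)
    (hC : ∀ u ∈ Metric.ball u0 r, ∀ t ∈ uIoc (0:ℝ) 1, |F (u + t) - F u| ≤ C * t ^ α) :
    HasDerivAt (HT i F) (MD i F u0) u0 := by
  set P : ℝ → ℝ := fun x => ∫ t in (0:ℝ)..x, F t with hPdef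
  have hP : ∀ x, HasDerivAt P (F x) x := fun x => hF.integral_hasStrictDerivAt 0 x |>.hasDerivAt
  have hPc : Continuous P := continuous_iff_continuousAt.2 fun x => (hP x).continuousAt
  rw [show HT i F = MD i P from funext fun u => (HT_parts hF hP hi u).1]
  refine HasDerivAt.sub ?_ (HasDerivAt.const_mul i ?_)
  · exact ((hP (u0 + 1)).comp_add_const u0 1).sub (hP u0)
  refine (intervalIntegral.hasDerivAt_integral_of_dominated_loc_of_deriv_le
    (bound := fun t => C * t ^ (α + (i - 1))) (s := Metric.ball u0 r)
    (F := fun u t => (P (u + t) - P u) * t ^ (i - 1))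
    (F' := fun u t => (F (u + t) - F u) * t ^ (i - 1))
    (Metric.ball_mem_nhds u0 hr) ?_ ?_ ?_ ?_ ?_ ?_).2
  · exact Eventually.of_forall fun u => MD_meas hPc _ u _
  · exact (HT_parts hF hP hi u0).2
  · exact MD_meas hF _ u0 _
  · exact Eventually.of_forall fun t ht u hu => MD_bound (hC u hu t ht) ht
  · exact (intervalIntegral.intervalIntegrable_rpow' (by linarith)).const_mul C
  · refine Eventually.of_forall fun t ht u hu => ?_
    exact (((hP (u + t)).comp_add_const u t).sub (hP u)).mul_const _

/-- For `i > 0`. -/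
lemma HT_deriv_pos {F : ℝ → ℝ} (hF : Continuous F) {i u0 : ℝ} (hi : 0 < i) :
    HasDerivAt (HT i F) (F (u0 + 1) - i * HT (i - 1) F u0) u0 := by
  obtain ⟨M, hM0, hM⟩ := loc_bound hF u0
  have h := HT_marchaud (i := i) (α := 0) (C := 2 * M) (r := 1) (u0 := u0) hF (by linarith) one_pos
    (by linarith) ?_
  · convert h using 1
    unfold MD HT
    simp_rw [sub_mul]
    have h1 : IntervalIntegrable (fun t : ℝ => t ^ (i - 1)) volume 0 1 :=
      intervalIntegral.intervalIntegrable_rpow' (by linarith)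
    rw [intervalIntegral.integral_sub (HT_int hF (by linarith) u0) (h1.const_mul _),
      intervalIntegral.integral_const_mul, integral_rpow (Or.inl (by linarith))]
    simp [Real.zero_rpow hi.ne']
    field_simp
    ring
  · intro u hu t ht
    have h1 := hM _ (mem_shift hu ht)
    rw [Metric.mem_ball, Real.dist_eq, abs_lt] at hu
    have h2 := hM u ⟨by linarith, by linarith⟩
    simp only [Real.rpow_zero, mul_one]
    exact (abs_sub _ _).trans (by linarith)

/-- Locally Hölder. -/
def LH (α : ℝ) (f : ℝ → ℝ) (x : ℝ) : Prop :=
  ∃ C : ℝ, 0 ≤ C ∧ ∀ᶠ p in 𝓝 x ×ˢ 𝓝 x, |f p.1 - f p.2| ≤ C * |p.1 - p.2| ^ α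

lemma LH.cont {α : ℝ} (hα : 0 < α) {f : ℝ → ℝ} {x : ℝ} (h : LH α f x) : ContinuousAt f x := by
  obtain ⟨C, hC, h⟩ := h
  have h1 : ∀ᶠ y in 𝓝 x, |f y - f x| ≤ C * |y - x| ^ α := by
    obtain ⟨p, hp, q, hq, hpq⟩ := eventually_prod_iff.1 h
    filter_upwards [hp] with y hy
    exact hpq hy hq.self_of_nhds
  have h2 : Tendsto (fun y => C * |y - x| ^ α) (𝓝 x) (𝓝 0) := by
    have : Continuous fun y => C * |y - x| ^ α :=
      continuous_const.mul ((by fun_prop : Continuous fun y => |y - x|).rpow_const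
        fun _ => Or.inr hα.le)
    simpa [Real.zero_rpow hα.ne'] using this.tendsto x
  rw [ContinuousAt, tendsto_iff_norm_sub_tendsto_zero]
  exact squeeze_zero' (Eventually.of_forall fun _ => norm_nonneg _) h1 h2

lemma LH.congr {α : ℝ} {f g : ℝ → ℝ} {x : ℝ} (h : LH α f x) (hfg : f =ᶠ[𝓝 x] g) : LH α g x := by
  obtain ⟨C, hC, h⟩ := h
  refine ⟨C, hC, ?_⟩
  filter_upwards [h, hfg.prod_mk hfg] with p hp hq
  rw [← hq.1, ← hq.2]; exact hp

lemma near_one (x : ℝ) : ∀ᶠ p : ℝ × ℝ in 𝓝 x ×ˢ 𝓝 x, |p.1 - p.2| ≤ 1 := by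
  rw [← nhds_prod_eq]
  have : ContinuousAt (fun p : ℝ × ℝ => |p.1 - p.2|) (x, x) := by fun_prop
  exact (this.eventually_lt continuousAt_const (by simp)).mono fun p hp => le_of_lt hp

lemma LH.of_lip {α : ℝ} (hα : α ≤ 1) {f : ℝ → ℝ} {x : ℝ} (h : ContDiffAt ℝ 1 f x) :
    LH α f x := by
  obtain ⟨K, t, ht, hK⟩ := h.exists_lipschitzOnWith
  refine ⟨K, K.2, ?_⟩
  filter_upwards [prod_mem_prod ht ht, near_one x] with p hp h1
  have := hK.dist_le_mul _ hp.1 _ hp.2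
  rw [Real.dist_eq, Real.dist_eq] at this
  refine this.trans (mul_le_mul_of_nonneg_left ?_ K.2)
  rcases eq_or_lt_of_le (abs_nonneg (p.1 - p.2)) with h0 | h0
  · rw [← h0]; exact Real.rpow_nonneg le_rfl _
  · simpa using Real.rpow_le_rpow_of_exponent_ge h0 h1 hα

lemma LH.add {α : ℝ} {f g : ℝ → ℝ} {x : ℝ} (hf : LH α f x) (hg : LH α g x) :
    LH α (fun y => f y + g y) x := by
  obtain ⟨C, hC, h⟩ := hf
  obtain ⟨D, hD, h'⟩ := hg
  refine ⟨C + D, by positivity, ?_⟩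
  filter_upwards [h, h'] with p hp hq
  rw [show f p.1 + g p.1 - (f p.2 + g p.2) = (f p.1 - f p.2) + (g p.1 - g p.2) by ring, add_mul]
  exact (abs_add_le _ _).trans (add_le_add hp hq)

lemma LH.mul {α : ℝ} (hα : 0 < α) {f g : ℝ → ℝ} {x : ℝ} (hf : LH α f x) (hg : LH α g x) :
    LH α (fun y => f y * g y) x := by
  have bf : ∀ᶠ y in 𝓝 x, |f y| ≤ |f x| + 1 :=
    ((hf.cont hα).abs.eventually_lt continuousAt_const (by linarith)).mono fun p hp => le_of_lt hp
  have bg : ∀ᶠ y in 𝓝 x, |g y| ≤ |g x| + 1 :=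
    ((hg.cont hα).abs.eventually_lt continuousAt_const (by linarith)).mono fun p hp => le_of_lt hp
  obtain ⟨C, hC, h⟩ := hf
  obtain ⟨D, hD, h'⟩ := hg
  refine ⟨(|f x| + 1) * D + C * (|g x| + 1), by positivity, ?_⟩
  filter_upwards [h, h', bf.prod_mk bg] with p hp hq hb
  rw [show f p.1 * g p.1 - f p.2 * g p.2 = f p.1 * (g p.1 - g p.2) + (f p.1 - f p.2) * g p.2 by ring]
  refine (abs_add_le _ _).trans ?_
  rw [abs_mul, abs_mul, add_mul]
  have h1 := mul_le_mul hb.1 hq (abs_nonneg _) (by positivity)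
  have h2 := mul_le_mul hp hb.2 (abs_nonneg _) (by positivity)
  nlinarith [h1, h2]

lemma LH.comp {α : ℝ} (hα : 0 < α) {f r : ℝ → ℝ} {x : ℝ} (hf : LH α f (r x))
    (hr : ContDiffAt ℝ 1 r x) : LH α (fun y => f (r y)) x := by
  obtain ⟨K, t, ht, hK⟩ := hr.exists_lipschitzOnWith
  obtain ⟨C, hC, h⟩ := hf
  refine ⟨C * K ^ α, by positivity, ?_⟩
  have hT : Tendsto (fun p : ℝ × ℝ => (r p.1, r p.2)) (𝓝 x ×ˢ 𝓝 x) (𝓝 (r x) ×ˢ 𝓝 (r x)) :=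
    hr.continuousAt.tendsto.prodMap hr.continuousAt.tendsto
  filter_upwards [prod_mem_prod ht ht, hT.eventually h] with p hp h1
  have := hK.dist_le_mul _ hp.1 _ hp.2
  rw [Real.dist_eq, Real.dist_eq] at this
  refine h1.trans ?_
  rw [mul_assoc, ← Real.mul_rpow K.coe_nonneg (abs_nonneg _)]
  exact mul_le_mul_of_nonneg_left (Real.rpow_le_rpow (abs_nonneg _) this hα.le) hC

/-- `C^{k,α}` locally on the open set `U`. -/
def QH (α : ℝ) (U : Set ℝ) : ℕ → (ℝ → ℝ) → Prop
  | 0, f => ∀ x ∈ U, LH α f x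
  | k + 1, f => (∀ x ∈ U, DifferentiableAt ℝ f x) ∧ QH α U k (deriv f)

lemma QH.congr {α : ℝ} {U : Set ℝ} (hU : IsOpen U) (k : ℕ) : ∀ {f g : ℝ → ℝ}, QH α U k f →
    EqOn f g U → QH α U k g := by
  induction k with
  | zero =>
    intro f g hf h x hx
    exact (hf x hx).congr (h.eventuallyEq_of_mem (hU.mem_nhds hx))
  | succ k ih =>
    intro f g hf h
    refine ⟨fun x hx => (hf.1 x hx).congr_of_eventuallyEq
      (h.eventuallyEq_of_mem (hU.mem_nhds hx)).symm, ih hf.2 fun x hx => ?_⟩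
    exact (h.eventuallyEq_of_mem (hU.mem_nhds hx)).deriv_eq

lemma QH.cont {α : ℝ} (hα : 0 < α) {U : Set ℝ} {k : ℕ} {f : ℝ → ℝ} (h : QH α U k f) :
    ∀ x ∈ U, ContinuousAt f x := by
  cases k with
  | zero => exact fun x hx => (h x hx).cont hα
  | succ k => exact fun x hx => (h.1 x hx).continuousAt

lemma QH.down {α : ℝ} (hα : 0 < α) (hα1 : α ≤ 1) {U : Set ℝ} (hU : IsOpen U) (k : ℕ) :
    ∀ {f : ℝ → ℝ}, QH α U (k + 1) f → QH α U k f := by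
  induction k with
  | zero =>
    intro f hf x hx
    refine LH.of_lip hα1 ?_
    have : ContDiffOn ℝ ((0 : WithTop ℕ∞) + 1) f U := by
      refine (contDiffOn_succ_iff_deriv_of_isOpen hU).2
        ⟨fun y hy => (hf.1 y hy).differentiableWithinAt, fun h => by simp at h, ?_⟩
      exact contDiffOn_zero.2 fun y hy => (QH.cont hα hf.2 y hy).continuousWithinAt
    exact (this.contDiffAt (hU.mem_nhds hx)).of_le (by simp)
  | succ k ih =>
    intro f hf
    exact ⟨hf.1, ih hf.2⟩

lemma QH.add {α : ℝ} {U : Set ℝ} (hU : IsOpen U) (k : ℕ) :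
    ∀ {f g : ℝ → ℝ}, QH α U k f → QH α U k g → QH α U k (fun y => f y + g y) := by
  induction k with
  | zero => intro f g hf hg x hx; exact (hf x hx).add (hg x hx)
  | succ k ih =>
    intro f g hf hg
    refine ⟨fun x hx => (hf.1 x hx).add (hg.1 x hx), QH.congr hU k (ih hf.2 hg.2) fun x hx => ?_⟩
    exact (((hf.1 x hx).hasDerivAt.add (hg.1 x hx).hasDerivAt).deriv).symm

lemma QH.mul {α : ℝ} (hα : 0 < α) (hα1 : α ≤ 1) {U : Set ℝ} (hU : IsOpen U) (k : ℕ) :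
    ∀ {f g : ℝ → ℝ}, QH α U k f → QH α U k g → QH α U k (fun y => f y * g y) := by
  induction k with
  | zero => intro f g hf hg x hx; exact (hf x hx).mul hα (hg x hx)
  | succ k ih =>
    intro f g hf hg
    refine ⟨fun x hx => (hf.1 x hx).mul (hg.1 x hx),
      QH.congr hU k (QH.add hU k (ih hf.2 (hg.down hα hα1 hU)) (ih (hf.down hα hα1 hU) hg.2))
      fun x hx => ?_⟩
    exact (((hf.1 x hx).hasDerivAt.mul (hg.1 x hx).hasDerivAt).deriv).symm

lemma QH.of_smooth {α : ℝ} (hα1 : α ≤ 1) {U : Set ℝ} (hU : IsOpen U) (k : ℕ) :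
    ∀ {f : ℝ → ℝ}, ContDiffOn ℝ (k + 1 : ℕ) f U → QH α U k f := by
  induction k with
  | zero => intro f hf x hx; exact LH.of_lip hα1 (by simpa using hf.contDiffAt (hU.mem_nhds hx))
  | succ k ih =>
    intro f hf
    have h := (contDiffOn_succ_iff_deriv_of_isOpen (n := ((k + 1 : ℕ) : WithTop ℕ∞)) hU).1
      (by exact_mod_cast hf)
    exact ⟨fun x hx => (h.1 x hx).differentiableAt (hU.mem_nhds hx), ih h.2.2⟩

lemma QH.comp {α : ℝ} (hα : 0 < α) (hα1 : α ≤ 1) {U V : Set ℝ} (hU : IsOpen U) (hV : IsOpen V)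
    {r : ℝ → ℝ} (hr : ∀ n : ℕ, ContDiffOn ℝ n r V) (hm : MapsTo r V U) (k : ℕ) :
    ∀ {f : ℝ → ℝ}, QH α U k f → QH α V k (fun y => f (r y)) := by
  induction k with
  | zero =>
    intro f hf x hx
    exact (hf (r x) (hm hx)).comp hα (by simpa using (hr 1).contDiffAt (hV.mem_nhds hx))
  | succ k ih =>
    intro f hf
    have h := (contDiffOn_succ_iff_deriv_of_isOpen (n := ((k + 1 : ℕ) : WithTop ℕ∞)) hV).1
      (by exact_mod_cast hr (k + 1 + 1))
    have hd : ∀ x ∈ V, HasDerivAt (fun y => f (r y)) (deriv f (r x) * deriv r x) x := fun x hx =>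
      (hf.1 (r x) (hm hx)).hasDerivAt.comp x
        ((h.1 x hx).differentiableAt (hV.mem_nhds hx)).hasDerivAt
    refine ⟨fun x hx => (hd x hx).differentiableAt,
      QH.congr hV k (QH.mul hα hα1 hV k (ih hf.2) (QH.of_smooth hα1 hV k h.2.2)) fun x hx => ?_⟩
    exact (hd x hx).deriv.symm

lemma QH.union {α : ℝ} {U V : Set ℝ} (k : ℕ) :
    ∀ {f : ℝ → ℝ}, QH α U k f → QH α V k f → QH α (U ∪ V) k f := by
  induction k with
  | zero => intro f hf hg x hx; exact hx.elim (hf x) (hg x)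
  | succ k ih => intro f hf hg; exact ⟨fun x hx => hx.elim (hf.1 x) (hg.1 x), ih hf.2 hg.2⟩

lemma QH.of_iter {α : ℝ} {U : Set ℝ} (hU : IsOpen U) (k : ℕ) :
    ∀ {f : ℝ → ℝ}, ContDiffOn ℝ k f U → QH α U 0 (iteratedDerivWithin k f U) → QH α U k f := by
  induction k with
  | zero =>
    intro f _ h
    exact QH.congr hU 0 h fun x hx => by simp
  | succ k ih =>
    intro f hf h
    have h' := (contDiffOn_succ_iff_deriv_of_isOpen (n := (k : WithTop ℕ∞)) hU).1
      (by exact_mod_cast hf)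
    refine ⟨fun x hx => (h'.1 x hx).differentiableAt (hU.mem_nhds hx), ih h'.2.2 ?_⟩
    rw [iteratedDerivWithin_succ'] at h
    exact QH.congr hU 0 h (iteratedDerivWithin_congr fun x hx => derivWithin_of_isOpen hU hx)

/-- the Hölder gain -/
lemma HT_holder {α i : ℝ} (hα : 0 < α) (hi : -1 < i) (hαi : 0 < α + i) (k : ℕ) :
    ∀ {F : ℝ → ℝ}, QH α univ k F → ContDiff ℝ (k + 1 : ℕ) (HT i F) := by
  induction k with
  | zero =>
    intro F hF
    have hc : Continuous F := continuous_iff_continuousAt.2 fun x => (hF x trivial).cont hα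
    have key : ∀ u0, ∃ r C : ℝ, 0 < r ∧
        ∀ u ∈ Metric.ball u0 r, ∀ t ∈ uIoc (0:ℝ) 1, |F (u + t) - F u| ≤ C * t ^ α := by
      intro u0
      obtain ⟨C, hC, h⟩ := hF u0 trivial
      obtain ⟨M, hM0, hM⟩ := loc_bound hc u0
      rw [← nhds_prod_eq] at h
      obtain ⟨ε, hε, h⟩ := Metric.eventually_nhds_iff.1 h
      refine ⟨min 1 (ε / 2), C + 2 * M / (ε / 2) ^ α, by positivity, fun u hu t ht => ?_⟩
      have hu1 : u ∈ Metric.ball u0 1 := Metric.ball_subset_ball (min_le_left _ _) hu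
      have hu2 : u ∈ Metric.ball u0 (ε / 2) := Metric.ball_subset_ball (min_le_right _ _) hu
      have h1 := hM _ (mem_shift hu1 ht)
      rw [uIoc_of_le zero_le_one] at ht
      have htα : 0 < t ^ α := Real.rpow_pos_of_pos ht.1 _
      have hεα : 0 < (ε / 2) ^ α := Real.rpow_pos_of_pos (by positivity) _
      rw [Metric.mem_ball, Real.dist_eq] at hu1 hu2
      rcases lt_or_ge t (ε / 2) with hlt | hge
      · have h3 := h (y := (u + t, u)) (by
          rw [Prod.dist_eq, Real.dist_eq, Real.dist_eq]
          rw [abs_lt] at hu2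
          refine max_lt (abs_lt.2 ⟨?_, ?_⟩) (abs_lt.2 ⟨?_, ?_⟩) <;> linarith [ht.1, hu2.1, hu2.2])
        simp only [add_sub_cancel_left, abs_of_pos ht.1] at h3
        refine h3.trans (mul_le_mul_of_nonneg_right ?_ htα.le)
        have : 0 ≤ 2 * M / (ε / 2) ^ α := by positivity
        linarith
      · rw [abs_lt] at hu1
        have h2 := hM u ⟨by linarith, by linarith⟩
        have h3 : |F (u + t) - F u| ≤ 2 * M := (abs_sub _ _).trans (by linarith)
        have h4 : (ε / 2) ^ α ≤ t ^ α := Real.rpow_le_rpow (by positivity) hge hα.le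
        have h5 : 2 * M ≤ 2 * M / (ε / 2) ^ α * t ^ α := by
          rw [div_mul_eq_mul_div, le_div_iff₀ hεα]
          exact mul_le_mul_of_nonneg_left h4 (by positivity)
        have : 0 ≤ C * t ^ α := by positivity
        rw [add_mul]; linarith
    have hd : ∀ u, HasDerivAt (HT i F) (MD i F u) u := fun u => by
      obtain ⟨r, C, hr, h⟩ := key u
      exact HT_marchaud hc hi hr hαi h
    have hdc : Continuous (MD i F) := continuous_iff_continuousAt.2 fun u => by
      obtain ⟨r, C, hr, h⟩ := key u
      exact MD_cont hc hr hαi h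
    have : ContDiff ℝ ((0 : WithTop ℕ∞) + 1) (HT i F) := by
      refine contDiff_succ_iff_deriv.2 ⟨fun u => (hd u).differentiableAt, fun h => by simp at h, ?_⟩
      rw [show deriv (HT i F) = MD i F from funext fun u => (hd u).deriv]
      exact contDiff_zero.2 hdc
    simpa using this
  | succ k ih =>
    intro F hF
    have hd : ∀ u, HasDerivAt (HT i F) (HT i (deriv F) u) u :=
      HT_deriv (continuous_iff_continuousAt.2 fun x => hF.2.cont hα x trivial)
        (fun x => (hF.1 x trivial).hasDerivAt) hi
    have : ContDiff ℝ (((k + 1 : ℕ) : WithTop ℕ∞) + 1) (HT i F) := by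
      refine contDiff_succ_iff_deriv.2 ⟨fun u => (hd u).differentiableAt, fun h => by simp at h, ?_⟩
      rw [show deriv (HT i F) = HT i (deriv F) from funext fun u => (hd u).deriv]
      exact ih hF.2
    exact_mod_cast this

/-- smooth remainder -/
noncomputable def Rf (c : ℝ) (ρ : ℝ → ℝ) (i u : ℝ) : ℝ := ∫ w in Ioo c 1, ρ w * (w - u) ^ i

lemma Rf_meas {c : ℝ} {ρ : ℝ → ℝ} (hρ : IntegrableOn ρ (Ioo c 1)) (i u : ℝ) :
    AEStronglyMeasurable (fun w => ρ w * (w - u) ^ i) (volume.restrict (Ioo c 1)) := by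
  have : Measurable (fun w : ℝ => (w - u) ^ i) := (meas_rpow i).comp (measurable_id.sub_const u)
  exact hρ.aestronglyMeasurable.mul this.aestronglyMeasurable

lemma Rf_bound {c u0 : ℝ} (h : u0 < c) (i : ℝ) : ∃ M : ℝ, 0 ≤ M ∧
    ∀ u ∈ Metric.ball u0 ((c - u0) / 2), ∀ w ∈ Ioo c 1, |(w - u) ^ i| ≤ M := by
  have hc : ContinuousOn (fun x : ℝ => x ^ i) (Icc ((c - u0) / 2) (1 - u0 + (c - u0) / 2)) := by
    intro x hx
    exact (Real.continuousAt_rpow_const _ _ (Or.inl (by linarith [hx.1]))).continuousWithinAt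
  obtain ⟨M, hM⟩ := isCompact_Icc.exists_bound_of_continuousOn hc
  refine ⟨|M|, abs_nonneg _, fun u hu w hw => (hM (w - u) ?_).trans (le_abs_self _)⟩
  rw [Metric.mem_ball, Real.dist_eq, abs_lt] at hu
  constructor <;> linarith [hw.1, hw.2, hu.1, hu.2]

lemma Rf_int {c u0 : ℝ} {ρ : ℝ → ℝ} (hρ : IntegrableOn ρ (Ioo c 1)) (h : u0 < c) (i : ℝ) :
    IntegrableOn (fun w => ρ w * (w - u0) ^ i) (Ioo c 1) := by
  obtain ⟨M, hM0, hM⟩ := Rf_bound h i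
  refine Integrable.mono' (hρ.norm.mul_const M) (Rf_meas hρ i u0) ?_
  refine (ae_restrict_iff' measurableSet_Ioo).2 (Eventually.of_forall fun w hw => ?_)
  rw [norm_mul]
  exact mul_le_mul_of_nonneg_left (hM u0 (Metric.mem_ball_self (by linarith)) w hw) (norm_nonneg _)

lemma Rf_deriv {c u0 : ℝ} {ρ : ℝ → ℝ} (hρ : IntegrableOn ρ (Ioo c 1)) (h : u0 < c) (i : ℝ) :
    HasDerivAt (Rf c ρ i) (-i * Rf c ρ (i - 1) u0) u0 := by
  obtain ⟨M, hM0, hM⟩ := Rf_bound h (i - 1)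
  have hr : 0 < (c - u0) / 2 := by linarith
  have key := (hasDerivAt_integral_of_dominated_loc_of_deriv_le
    (μ := volume.restrict (Ioo c 1))
    (bound := fun w => ‖ρ w‖ * (|i| * M)) (s := Metric.ball u0 ((c - u0) / 2))
    (F := fun u w => ρ w * (w - u) ^ i) (F' := fun u w => -i * (ρ w * (w - u) ^ (i - 1)))
    (Metric.ball_mem_nhds u0 hr) ?_ ?_ ?_ ?_ ?_ ?_).2
  · rw [integral_const_mul] at key
    exact key
  · exact Eventually.of_forall fun u => Rf_meas hρ i u
  · exact Rf_int hρ h i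
  · exact (Rf_meas hρ (i - 1) u0).const_mul _
  · refine (ae_restrict_iff' measurableSet_Ioo).2 (Eventually.of_forall fun w hw u hu => ?_)
    have := hM u hu w hw
    rw [norm_mul, norm_mul, norm_neg]
    simp only [Real.norm_eq_abs]
    have h2 : |ρ w| * |(w - u) ^ (i - 1)| ≤ |ρ w| * M :=
      mul_le_mul_of_nonneg_left this (abs_nonneg _)
    nlinarith [mul_le_mul_of_nonneg_left h2 (abs_nonneg i)]
  · exact hρ.norm.mul_const _
  · refine (ae_restrict_iff' measurableSet_Ioo).2 (Eventually.of_forall fun w hw u hu => ?_)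
    rw [Metric.mem_ball, Real.dist_eq, abs_lt] at hu
    have h1 : HasDerivAt (fun u => w - u) (-1) u := by
      simpa using (hasDerivAt_id u).const_sub w
    have h2 := (h1.rpow_const (p := i) (Or.inl (by linarith [hu.1, hu.2, hw.1]))).const_mul (ρ w)
    refine h2.congr_deriv ?_
    ring

lemma Rf_contDiff {c : ℝ} {ρ : ℝ → ℝ} (hρ : IntegrableOn ρ (Ioo c 1)) (n : ℕ) :
    ∀ i : ℝ, ContDiffOn ℝ n (Rf c ρ i) (Iio c) := by
  induction n with
  | zero =>
    intro i
    exact contDiffOn_zero.2 fun u hu => (Rf_deriv hρ hu i).continuousAt.continuousWithinAt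
  | succ n ih =>
    intro i
    have : ContDiffOn ℝ ((n : WithTop ℕ∞) + 1) (Rf c ρ i) (Iio c) := by
      refine (contDiffOn_succ_iff_deriv_of_isOpen isOpen_Iio).2 ⟨fun u hu =>
        (Rf_deriv hρ hu i).differentiableAt.differentiableWithinAt, fun h => by simp at h, ?_⟩
      exact (contDiffOn_const.mul (ih (i - 1))).congr fun u hu => (Rf_deriv hρ hu i).deriv
    exact_mod_cast this

lemma growth (k : ℕ) : ∀ (f : ℝ → ℝ) (e : ℝ), e < 0 → ContDiffOn ℝ k f (Ioo 0 1) →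
    (∃ C : ℝ, 0 ≤ C ∧ ∃ δ ∈ Ioo (0:ℝ) 1, ∀ x ∈ Ioo (1 - δ) 1,
      |iteratedDerivWithin k f (Ioo 0 1) x| ≤ C * (1 - x) ^ (e - k)) →
    (∃ C : ℝ, 0 ≤ C ∧ ∃ δ ∈ Ioo (0:ℝ) 1, ∀ x ∈ Ioo (1 - δ) 1, |f x| ≤ C * (1 - x) ^ e) := by
  induction k with
  | zero => intro f e he hf h; simpa using h
  | succ k ih =>
    intro f e he hf ⟨C0, hC0, δ0, hδ0, h0⟩
    have h' := (contDiffOn_succ_iff_deriv_of_isOpen (n := (k : WithTop ℕ∞))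
      (isOpen_Ioo (a := (0:ℝ)) (b := 1))).1 (by exact_mod_cast hf)
    obtain ⟨C, hC, δ, hδ, h⟩ := ih (deriv f) (e - 1) (by linarith) h'.2.2 (by
      refine ⟨C0, hC0, δ0, hδ0, fun x hx => ?_⟩
      have h1 := h0 x hx
      rw [iteratedDerivWithin_succ'] at h1
      have hx' : x ∈ Ioo (0:ℝ) 1 := ⟨by linarith [hx.1, hδ0.2], hx.2⟩
      rw [iteratedDerivWithin_congr (g := deriv f)
        (fun y hy => derivWithin_of_isOpen isOpen_Ioo hy) hx'] at h1
      refine h1.trans (le_of_eq ?_)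
      congr 2
      push_cast
      ring)
    have hd : ∀ y ∈ Ioo (0:ℝ) 1, HasDerivAt f (deriv f y) y := fun y hy =>
      ((h'.1 y hy).differentiableAt (isOpen_Ioo.mem_nhds hy)).hasDerivAt
    have hne : 0 < -e := by linarith
    refine ⟨|f (1 - δ / 2)| + C / (-e), by positivity, δ / 2, ⟨by linarith [hδ.1], by linarith [hδ.2, hδ.1]⟩,
      fun x hx => ?_⟩
    have hB : ∀ y, y < 1 → HasDerivAt (fun y : ℝ => |f (1 - δ / 2)| + C / (-e) * (1 - y) ^ e)
        (C * (1 - y) ^ (e - 1)) y := by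
      intro y hy
      have h1 : HasDerivAt (fun u : ℝ => 1 - u) (-1) y := by
        simpa using (hasDerivAt_id y).const_sub 1
      have h2 := ((h1.rpow_const (p := e) (Or.inl (by linarith))).const_mul (C / (-e))).const_add
        |f (1 - δ / 2)|
      refine h2.congr_deriv ?_
      have : e ≠ 0 := he.ne
      field_simp
    have hsub : ∀ y, 1 - δ / 2 ≤ y → y ≤ x → y ∈ Ioo (0:ℝ) 1 ∧ y ∈ Ioo (1 - δ) 1 := by
      intro y h1 h2
      refine ⟨⟨?_, ?_⟩, ?_, ?_⟩ <;> linarith [hx.2, hδ.1, hδ.2]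
    have key := image_norm_le_of_norm_deriv_right_le_deriv_boundary' (f := f) (f' := deriv f)
      (a := 1 - δ / 2) (b := x) (B := fun y : ℝ => |f (1 - δ / 2)| + C / (-e) * (1 - y) ^ e)
      (B' := fun y => C * (1 - y) ^ (e - 1))
      (fun y hy => (hd y (hsub y hy.1 hy.2).1).continuousAt.continuousWithinAt)
      (fun y hy => (hd y (hsub y hy.1 hy.2.le).1).hasDerivWithinAt)
      (by
        have : 0 ≤ C / (-e) * (1 - (1 - δ / 2)) ^ e :=
          mul_nonneg (by positivity) (Real.rpow_nonneg (by linarith [hδ.1]) _)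
        simp only [Real.norm_eq_abs]
        linarith)
      (fun y hy => (hB y (hsub y hy.1 hy.2).1.2).continuousAt.continuousWithinAt)
      (fun y hy => (hB y (hsub y hy.1 hy.2.le).1.2).hasDerivWithinAt)
      (fun y hy => h y (hsub y hy.1 hy.2.le).2)
      (right_mem_Icc.2 hx.1.le)
    simp only [Real.norm_eq_abs] at key
    have h1 : 1 ≤ (1 - x) ^ e := Real.one_le_rpow_of_pos_of_le_one_of_nonpos (by linarith [hx.2])
      (by linarith [hx.1, hδ.2]) he.le
    rw [add_mul]
    have := mul_le_mul_of_nonneg_left h1 (abs_nonneg (f (1 - δ / 2)))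
    linarith

lemma phi_int {f : ℝ → ℝ} (hf : ContinuousOn f (Ioo 0 1)) {e : ℝ} (he : -1 < e)
    (h : ∃ C : ℝ, 0 ≤ C ∧ ∃ δ ∈ Ioo (0:ℝ) 1, ∀ x ∈ Ioo (1 - δ) 1, |f x| ≤ C * (1 - x) ^ e)
    {d : ℝ} (hd : d ∈ Ioo (0:ℝ) 1) : IntegrableOn f (Ioo d 1) := by
  obtain ⟨C, hC, δ, hδ, h⟩ := h
  set m := max d (1 - δ / 2) with hm
  have hm1 : m < 1 := max_lt hd.2 (by linarith [hδ.1])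
  have hm0 : d ≤ m := le_max_left _ _
  have hm2 : 1 - δ / 2 ≤ m := le_max_right _ _
  have h1 : IntegrableOn f (Icc d m) :=
    (hf.mono fun x hx => ⟨hd.1.trans_le hx.1, hx.2.trans_lt hm1⟩).integrableOn_Icc
  have h2 : IntegrableOn f (Ioo m 1) := by
    have hi : IntervalIntegrable (fun x : ℝ => C * (1 - x) ^ e) volume m 1 := by
      have := ((intervalIntegral.intervalIntegrable_rpow' (a := 1 - m) (b := 0) he).comp_sub_left
        1).const_mul C
      simpa using this
    have hi' : IntegrableOn (fun x : ℝ => C * (1 - x) ^ e) (Ioo m 1) :=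
      ((intervalIntegrable_iff_integrableOn_Ioo_of_le hm1.le).1 hi)
    refine Integrable.mono' hi' ?_ ?_
    · refine (hf.mono fun x hx => ?_).aestronglyMeasurable measurableSet_Ioo
      exact ⟨hd.1.trans (hm0.trans_lt hx.1), hx.2⟩
    · refine (ae_restrict_iff' measurableSet_Ioo).2 (Eventually.of_forall fun x hx => ?_)
      exact h x ⟨by linarith [hx.1, hδ.1], hx.2⟩
  refine (h1.union h2).mono_set fun x hx => ?_
  rcases le_or_gt x m with h3 | h3
  · exact Or.inl ⟨hx.1.le, h3⟩
  · exact Or.inr ⟨h3, hx.2⟩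

noncomputable def chi (φ : ℝ → ℝ) (w : ℝ) : ℝ := φ (√w) * (1 / (2 * √w))

noncomputable def GG (φ : ℝ → ℝ) (i u : ℝ) : ℝ := ∫ w in Ioo u 1, chi φ w * (w - u) ^ i

lemma sqrt_image {u : ℝ} (hu : 0 < u) : Real.sqrt '' (Ioo u 1) = Ioo (√u) 1 := by
  ext x
  constructor
  · rintro ⟨w, hw, rfl⟩
    exact ⟨Real.sqrt_lt_sqrt hu.le hw.1, by simpa using Real.sqrt_lt_sqrt (hu.trans hw.1).le hw.2⟩
  · intro hx
    have hx0 : 0 < x := (Real.sqrt_pos.2 hu).trans hx.1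
    refine ⟨x ^ 2, ⟨(Real.sqrt_lt' hx0).1 hx.1, by nlinarith [hx.2]⟩, Real.sqrt_sq hx0.le⟩

lemma sqrt_deriv {u : ℝ} (hu : 0 < u) : ∀ x ∈ Ioo u 1,
    HasDerivWithinAt Real.sqrt (1 / (2 * √x)) (Ioo u 1) x := fun x hx =>
  (Real.hasDerivAt_sqrt (hu.trans hx.1).ne').hasDerivWithinAt

lemma sqrt_injOn {u : ℝ} (hu : 0 < u) : InjOn Real.sqrt (Ioo u 1) := fun x hx y hy h =>
  (Real.sqrt_inj (hu.trans hx.1).le (hu.trans hy.1).le).1 h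

lemma chi_int {φ : ℝ → ℝ} (hφ : ∀ d ∈ Ioo (0:ℝ) 1, IntegrableOn φ (Ioo d 1)) {c : ℝ}
    (hc : c ∈ Ioo (0:ℝ) 1) : IntegrableOn (chi φ) (Ioo c 1) := by
  have h := hφ (√c) ⟨Real.sqrt_pos.2 hc.1, by simpa using Real.sqrt_lt_sqrt hc.1.le hc.2⟩
  rw [← sqrt_image hc.1, integrableOn_image_iff_integrableOn_abs_deriv_smul measurableSet_Ioo
    (sqrt_deriv hc.1) (sqrt_injOn hc.1)] at h
  refine h.congr_fun (fun x hx => ?_) measurableSet_Ioo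
  simp only [chi, smul_eq_mul]
  rw [abs_of_nonneg (by positivity)]
  ring

lemma gfun_eq (φ : ℝ → ℝ) (i : ℝ) {η : ℝ} (hη : 0 < η) :
    gfun φ i η = (2 ^ i)⁻¹ * GG φ i (Real.exp (-2 * η)) := by
  have hs : √(Real.exp (-2 * η)) = Real.exp (-η) := by
    rw [show -2 * η = -η + -η by ring, Real.exp_add, Real.sqrt_mul_self (Real.exp_pos _).le]
  have hu := Real.exp_pos (-2 * η)
  unfold gfun GG
  rw [intervalIntegral.integral_of_le (by simp [hη.le]), integral_Ioc_eq_integral_Ioo, ← hs,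
    ← sqrt_image hu, integral_image_eq_integral_abs_deriv_smul measurableSet_Ioo
    (sqrt_deriv hu) (sqrt_injOn hu), ← integral_const_mul]
  refine setIntegral_congr_fun measurableSet_Ioo fun w hw => ?_
  simp only [chi, smul_eq_mul]
  rw [abs_of_nonneg (by positivity), Real.sq_sqrt (hu.trans hw.1).le,
    Real.div_rpow (by linarith [hw.1]) zero_le_two]
  ring

lemma sqrt_maps : MapsTo Real.sqrt (Ioo 0 1) (Ioo 0 1) := fun x hx =>
  ⟨Real.sqrt_pos.2 hx.1, by simpa using Real.sqrt_lt_sqrt hx.1.le hx.2⟩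

lemma sqrt_smooth (n : WithTop ℕ∞) : ContDiffOn ℝ n Real.sqrt (Ioo 0 1) := fun x hx =>
  (Real.contDiffAt_sqrt hx.1.ne').contDiffWithinAt

lemma inv_smooth (n : WithTop ℕ∞) : ContDiffOn ℝ n (fun w => 1 / (2 * √w)) (Ioo 0 1) := by
  refine contDiffOn_const.div (contDiffOn_const.mul (sqrt_smooth n)) fun x hx => ?_
  have := Real.sqrt_pos.2 hx.1
  positivity

lemma link {k : ℕ} {φ : ℝ → ℝ} (hφ : ContDiffOn ℝ k φ (Ioo 0 1))
    (hint : ∀ d ∈ Ioo (0:ℝ) 1, IntegrableOn φ (Ioo d 1)) {u0 : ℝ} (hu0 : u0 ∈ Ioo (0:ℝ) 1) :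
    ∃ (F ρ : ℝ → ℝ) (a c : ℝ), 0 < a ∧ a < u0 ∧ u0 < c ∧ c < 1 ∧ ContDiff ℝ k F ∧
      (∀ x, 1 ≤ x → F x = 0) ∧
      (∀ α : ℝ, 0 < α → α ≤ 1 → QH α (Ioo 0 1) k φ → QH α univ k F) ∧
      IntegrableOn ρ (Ioo c 1) ∧
      ∀ i : ℝ, -1 < i → ∀ u ∈ Ioo a c, GG φ i u = HT i F u + Rf c ρ i u := by
  obtain ⟨r, hr, hr1, hr2⟩ : ∃ r : ℝ, 0 < r ∧ 3 * r ≤ u0 ∧ 3 * r ≤ 1 - u0 := by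
    refine ⟨min u0 (1 - u0) / 3, ?_, ?_, ?_⟩
    · have := lt_min hu0.1 (sub_pos.2 hu0.2); positivity
    · linarith [min_le_left u0 (1 - u0)]
    · linarith [min_le_right u0 (1 - u0)]
  let ζ : ContDiffBump u0 := ⟨r, 2 * r, hr, by linarith⟩
  have hz0 : ∀ x, x ∉ Metric.closedBall u0 (2 * r) → ζ x = 0 := fun x hx => by
    by_contra h
    exact hx (ζ.tsupport_eq ▸ subset_tsupport _ h)
  have hz1 : ∀ x ∈ Metric.closedBall u0 r, ζ x = 1 := fun x hx => ζ.one_of_mem_closedBall hx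
  have hzs : ∀ n : ℕ, ContDiff ℝ n (fun x => ζ x) := fun n => ζ.contDiff
  have hball : ∀ x ∈ Metric.closedBall u0 (2 * r), x ∈ Ioo (0:ℝ) 1 := by
    intro x hx
    rw [Metric.mem_closedBall, Real.dist_eq, abs_le] at hx
    constructor <;> linarith [hx.1, hx.2]
  have hopen : IsOpen (Metric.closedBall u0 (2 * r))ᶜ := Metric.isClosed_closedBall.isOpen_compl
  set F : ℝ → ℝ := fun w => ζ w * chi φ w with hFdef
  have hF0 : ∀ x ∈ (Metric.closedBall u0 (2 * r))ᶜ, F x = 0 := fun x hx => by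
    simp [hFdef, hz0 x hx]
  have hchi : ContDiffOn ℝ k (chi φ) (Ioo 0 1) :=
    (hφ.comp (sqrt_smooth k) sqrt_maps).mul (inv_smooth k)
  have hFs : ContDiff ℝ k F := by
    rw [contDiff_iff_contDiffAt]
    intro x
    by_cases hx : x ∈ Metric.closedBall u0 (2 * r)
    · exact (hzs k).contDiffAt.mul (hchi.contDiffAt (isOpen_Ioo.mem_nhds (hball x hx)))
    · refine contDiffAt_const (c := (0:ℝ)) |>.congr_of_eventuallyEq ?_
      filter_upwards [hopen.mem_nhds hx] with y hy using hF0 y hy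
  have hFc : Continuous F := hFs.continuous
  have hc : u0 + r ∈ Ioo (0:ℝ) 1 := ⟨by linarith [hu0.1], by linarith⟩
  have hρ : IntegrableOn (fun w => chi φ w - F w) (Ioo (u0 + r) 1) :=
    (chi_int hint hc).sub
      ((hFc.continuousOn.integrableOn_Icc (a := u0 + r) (b := 1)).mono_set Ioo_subset_Icc_self)
  have hF1 : ∀ x, 1 ≤ x → F x = 0 := fun x hx => hF0 x fun h => by
    linarith [(hball x h).2]
  refine ⟨F, fun w => chi φ w - F w, u0 - r, u0 + r, by linarith, by linarith, by linarith,
    by linarith, hFs, hF1, ?_, hρ, ?_⟩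
  · intro α hα hα1 hQ
    have h1 : QH α (Ioo 0 1) k F := by
      refine QH.mul hα hα1 isOpen_Ioo k (QH.of_smooth hα1 isOpen_Ioo k (hzs _).contDiffOn) ?_
      exact QH.mul hα hα1 isOpen_Ioo k
        (QH.comp hα hα1 isOpen_Ioo isOpen_Ioo (fun n => sqrt_smooth n) sqrt_maps k hQ)
        (QH.of_smooth hα1 isOpen_Ioo k (inv_smooth _))
    have h2 : QH α (Metric.closedBall u0 (2 * r))ᶜ k F :=
      QH.congr hopen k (QH.of_smooth hα1 hopen k (contDiffOn_const (c := (0:ℝ))))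
        fun x hx => (hF0 x hx).symm
    have h3 := QH.union k h1 h2
    rwa [show Ioo (0:ℝ) 1 ∪ (Metric.closedBall u0 (2 * r))ᶜ = univ from ?_] at h3
    ext x
    by_cases hx : x ∈ Metric.closedBall u0 (2 * r)
    · simpa using Or.inl (hball x hx)
    · exact ⟨fun _ => trivial, fun _ => Or.inr hx⟩
  · intro i hi u hu
    have hzero : ∀ w ∈ Ioo u 1 \ Ioo (u0 + r) 1, (chi φ w - F w) * (w - u) ^ i = 0 := by
      intro w hw
      have : w ∈ Metric.closedBall u0 r := by
        have h1 : w ≤ u0 + r := by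
          by_contra h
          exact hw.2 ⟨not_le.1 h, hw.1.2⟩
        rw [Metric.mem_closedBall, Real.dist_eq, abs_le]
        constructor <;> linarith [hw.1.1, hu.1]
      simp [hFdef, hz1 w this]
    have hsub : Ioo (u0 + r) 1 ⊆ Ioo u 1 := Ioo_subset_Ioo_left hu.2.le
    have hR := Rf_int hρ hu.2 i
    have hR' : IntegrableOn (fun w => (chi φ w - F w) * (w - u) ^ i) (Ioo u 1) :=
      hR.of_forall_sdiff_eq_zero measurableSet_Ioo hzero
    have hH : IntervalIntegrable (fun w => F w * (w - u) ^ i) volume u (u + 1) := by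
      have := (HT_int hFc hi u).comp_sub_right u
      simpa [add_comm] using this
    have hH1 : IntegrableOn (fun w => F w * (w - u) ^ i) (Ioo u 1) :=
      ((intervalIntegrable_iff_integrableOn_Ioo_of_le (by linarith)).1 hH).mono_set
        (Ioo_subset_Ioo_right (by linarith [hu.1]))
    have e1 : HT i F u = ∫ w in Ioo u 1, F w * (w - u) ^ i := by
      have := intervalIntegral.integral_comp_add_left (a := 0) (b := 1)
        (fun w => F w * (w - u) ^ i) u
      simp only [add_sub_cancel_left, add_zero] at this
      unfold HT
      rw [this, intervalIntegral.integral_of_le (by linarith)]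
      refine setIntegral_eq_of_subset_of_forall_sdiff_eq_zero measurableSet_Ioc
        (fun x hx => ⟨hx.1, by linarith [hx.2, hu.1]⟩) fun x hx => ?_
      rw [hF1 x, zero_mul]
      by_contra h
      exact hx.2 ⟨hx.1.1, not_le.1 h⟩
    have e2 : Rf (u0 + r) (fun w => chi φ w - F w) i u =
        ∫ w in Ioo u 1, (chi φ w - F w) * (w - u) ^ i :=
      (setIntegral_eq_of_subset_of_forall_sdiff_eq_zero measurableSet_Ioo hsub hzero).symm
    rw [e1, e2, ← integral_add hH1 hR']
    unfold GG
    congr 1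
    ext w
    ring

lemma GG_contDiffAt {k : ℕ} {φ : ℝ → ℝ} (hφ : ContDiffOn ℝ k φ (Ioo 0 1))
    (hint : ∀ d ∈ Ioo (0:ℝ) 1, IntegrableOn φ (Ioo d 1)) {u0 : ℝ} (hu0 : u0 ∈ Ioo (0:ℝ) 1)
    {i : ℝ} (hi : -1 < i) : ContDiffAt ℝ k (GG φ i) u0 := by
  obtain ⟨F, ρ, a, c, _, hau, huc, _, hF, _, _, hρ, h⟩ := link hφ hint hu0
  have h1 : ContDiffAt ℝ k (fun u => HT i F u + Rf c ρ i u) u0 :=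
    (HT_contDiff hi k hF).contDiffAt.add ((Rf_contDiff hρ k i).contDiffAt (Iio_mem_nhds huc))
  refine h1.congr_of_eventuallyEq ?_
  filter_upwards [Ioo_mem_nhds hau huc] with u hu using h i hi u hu

lemma GG_contDiffAt_holder {k : ℕ} {φ : ℝ → ℝ} (hφ : ContDiffOn ℝ k φ (Ioo 0 1))
    (hint : ∀ d ∈ Ioo (0:ℝ) 1, IntegrableOn φ (Ioo d 1)) {u0 : ℝ} (hu0 : u0 ∈ Ioo (0:ℝ) 1)
    {i α : ℝ} (hi : -1 < i) (hα : 0 < α) (hα1 : α ≤ 1) (hαi : 0 < α + i)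
    (hQ : QH α (Ioo 0 1) k φ) : ContDiffAt ℝ (k + 1 : ℕ) (GG φ i) u0 := by
  obtain ⟨F, ρ, a, c, _, hau, huc, _, hF, _, hFQ, hρ, h⟩ := link hφ hint hu0
  have h1 : ContDiffAt ℝ (k + 1 : ℕ) (fun u => HT i F u + Rf c ρ i u) u0 :=
    (HT_holder hα hi hαi k (hFQ α hα hα1 hQ)).contDiffAt.add
      ((Rf_contDiff hρ (k + 1) i).contDiffAt (Iio_mem_nhds huc))
  refine h1.congr_of_eventuallyEq ?_
  filter_upwards [Ioo_mem_nhds hau huc] with u hu using h i hi u hu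

lemma GG_hasDerivAt {k : ℕ} {φ : ℝ → ℝ} (hφ : ContDiffOn ℝ k φ (Ioo 0 1))
    (hint : ∀ d ∈ Ioo (0:ℝ) 1, IntegrableOn φ (Ioo d 1)) {u0 : ℝ} (hu0 : u0 ∈ Ioo (0:ℝ) 1)
    {i : ℝ} (hi : 0 < i) : HasDerivAt (GG φ i) (-i * GG φ (i - 1) u0) u0 := by
  obtain ⟨F, ρ, a, c, _, hau, huc, _, hF, hF1, _, hρ, h⟩ := link hφ hint hu0
  have h1 := (HT_deriv_pos (u0 := u0) hF.continuous hi).add (Rf_deriv hρ huc i)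
  rw [h (i - 1) (by linarith) u0 ⟨hau, huc⟩]
  refine (h1.congr_of_eventuallyEq ?_).congr_deriv ?_
  · filter_upwards [Ioo_mem_nhds hau huc] with u hu using h i (by linarith) u hu
  · rw [hF1 (u0 + 1) (by linarith [hu0.1])]; ring

lemma exp_mem {η : ℝ} (hη : 0 < η) : Real.exp (-2 * η) ∈ Ioo (0:ℝ) 1 :=
  ⟨Real.exp_pos _, Real.exp_lt_one_iff.2 (by linarith)⟩

lemma exp_mem' {η : ℝ} (hη : 0 < η) : Real.exp (-η) ∈ Ioo (0:ℝ) 1 :=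
  ⟨Real.exp_pos _, Real.exp_lt_one_iff.2 (by linarith)⟩

lemma gfun_contDiffOn {n : WithTop ℕ∞} {φ : ℝ → ℝ} {i : ℝ}
    (h : ∀ u ∈ Ioo (0:ℝ) 1, ContDiffAt ℝ n (GG φ i) u) : ContDiffOn ℝ n (gfun φ i) (Ioi 0) := by
  have : ContDiffOn ℝ n (fun η => (2 ^ i)⁻¹ * GG φ i (Real.exp (-2 * η))) (Ioi 0) := by
    intro η hη
    have h2 : ContDiffAt ℝ n (fun η : ℝ => Real.exp (-2 * η)) η := by fun_prop
    exact (contDiffAt_const.mul ((h _ (exp_mem hη)).comp η h2)).contDiffWithinAt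
  exact this.congr fun η hη => gfun_eq φ i hη

lemma gfun_hasDerivAt {k : ℕ} {φ : ℝ → ℝ} (hφ : ContDiffOn ℝ k φ (Ioo 0 1))
    (hint : ∀ d ∈ Ioo (0:ℝ) 1, IntegrableOn φ (Ioo d 1)) {i η : ℝ} (hi : 0 < i) (hη : 0 < η) :
    HasDerivAt (gfun φ i) (i * Real.exp (-2 * η) * gfun φ (i - 1) η) η := by
  have he : HasDerivAt (fun η : ℝ => Real.exp (-2 * η)) (Real.exp (-2 * η) * (-2)) η := by
    have : HasDerivAt (fun η : ℝ => -2 * η) (-2) η := by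
      simpa using (hasDerivAt_id η).const_mul (-2 : ℝ)
    exact this.exp
  have h1 := ((GG_hasDerivAt hφ hint (exp_mem hη) hi).comp η he).const_mul ((2 ^ i)⁻¹ : ℝ)
  refine (h1.congr_of_eventuallyEq ?_).congr_deriv ?_
  · filter_upwards [Ioi_mem_nhds hη] with x hx using gfun_eq φ i hx
  · rw [gfun_eq φ (i - 1) hη, Real.rpow_sub_one two_ne_zero]
    have : (2:ℝ) ^ i ≠ 0 := (Real.rpow_pos_of_pos two_pos i).ne'
    field_simp

lemma gfun_zero_hasDerivAt {φ : ℝ → ℝ} (hφ : ContinuousOn φ (Ioo 0 1))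
    (hint : ∀ d ∈ Ioo (0:ℝ) 1, IntegrableOn φ (Ioo d 1)) {η : ℝ} (hη : 0 < η) :
    HasDerivAt (gfun φ 0) (Real.exp (-η) * φ (Real.exp (-η))) η := by
  have hm := exp_mem' hη
  have h1 : HasDerivAt (fun u => ∫ x in u..1, φ x) (-φ (Real.exp (-η))) (Real.exp (-η)) :=
    intervalIntegral.integral_hasDerivAt_left
      ((intervalIntegrable_iff_integrableOn_Ioo_of_le hm.2.le).2 (hint _ hm))
      (hφ.stronglyMeasurableAtFilter isOpen_Ioo _ hm) (hφ.continuousAt (isOpen_Ioo.mem_nhds hm))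
  have he : HasDerivAt (fun η : ℝ => Real.exp (-η)) (Real.exp (-η) * (-1)) η :=
    (hasDerivAt_neg η).exp
  have h2 := h1.comp η he
  have e : gfun φ 0 = (fun u => ∫ x in u..1, φ x) ∘ fun η : ℝ => Real.exp (-η) := by
    ext η; simp [gfun]
  rw [e]
  exact h2.congr_deriv (by ring)

lemma contDiffOn_succ_of {k : ℕ} {f g : ℝ → ℝ} (h : ∀ η, 0 < η → HasDerivAt f (g η) η)
    (hg : ContDiffOn ℝ k g (Ioi 0)) : ContDiffOn ℝ (k + 1) f (Ioi 0) := by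
  refine (contDiffOn_succ_iff_deriv_of_isOpen isOpen_Ioi).2 ⟨fun u hu =>
    (h u hu).differentiableAt.differentiableWithinAt, fun h => by simp at h, ?_⟩
  exact hg.congr fun u hu => (h u hu).deriv

lemma QH_of_hyp {k : ℕ} {φ : ℝ → ℝ} (hφ : ContDiffOn ℝ k φ (Ioo 0 1)) {α Cα : ℝ} (hα : 0 < α)
    (h : ∀ x ∈ Ioo (0:ℝ) 1, ∀ y ∈ Ioo (0:ℝ) 1,
        |(1 - x) ^ k * iteratedDerivWithin k φ (Ioo 0 1) x -
          (1 - y) ^ k * iteratedDerivWithin k φ (Ioo 0 1) y| ≤ Cα * |x - y| ^ α) :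
    QH (min α 1) (Ioo 0 1) k φ := by
  have hα' : 0 < min α 1 := lt_min hα one_pos
  refine QH.of_iter isOpen_Ioo k hφ ?_
  have h1 : QH (min α 1) (Ioo 0 1) 0
      (fun x => (1 - x) ^ k * iteratedDerivWithin k φ (Ioo 0 1) x) := by
    intro x hx
    refine ⟨|Cα|, abs_nonneg _, ?_⟩
    filter_upwards [prod_mem_prod (isOpen_Ioo.mem_nhds hx) (isOpen_Ioo.mem_nhds hx)] with p hp
    refine (h p.1 hp.1 p.2 hp.2).trans ?_
    have hle : |p.1 - p.2| ≤ 1 := by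
      rw [abs_le]; constructor <;> linarith [hp.1.1, hp.1.2, hp.2.1, hp.2.2]
    have h3 : |p.1 - p.2| ^ α ≤ |p.1 - p.2| ^ (min α 1) := by
      rcases eq_or_lt_of_le (abs_nonneg (p.1 - p.2)) with h0 | h0
      · rw [← h0, Real.zero_rpow hα.ne', Real.zero_rpow hα'.ne']
      · exact Real.rpow_le_rpow_of_exponent_ge h0 hle (min_le_left _ _)
    exact mul_le_mul (le_abs_self _) h3 (Real.rpow_nonneg (abs_nonneg _) _) (abs_nonneg _)
  have h2 : QH (min α 1) (Ioo 0 1) 0 (fun x : ℝ => ((1 - x) ^ k)⁻¹) := by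
    refine QH.of_smooth (min_le_right _ _) isOpen_Ioo 0 ?_
    refine ContDiffOn.inv (by fun_prop) fun x hx => ?_
    exact pow_ne_zero _ (by linarith [hx.2])
  refine QH.congr isOpen_Ioo 0 (QH.mul hα' (min_le_right _ _) isOpen_Ioo 0 h2 h1) fun x hx => ?_
  have : (1 - x) ^ k ≠ 0 := pow_ne_zero _ (by linarith [hx.2])
  field_simp

lemma int_of_hyp {k : ℕ} {φ : ℝ → ℝ} (hφ : ContDiffOn ℝ k φ (Ioo 0 1))
    (hb : ∃ C > (0:ℝ), ∃ ε > (0:ℝ), ∃ δ ∈ Ioo (0:ℝ) 1,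
      ∀ x ∈ Ioo (1 - δ) 1,
        |(1 - x) ^ k * iteratedDerivWithin k φ (Ioo 0 1) x| ≤ C * (1 - x) ^ (-1 + ε)) :
    ∀ d ∈ Ioo (0:ℝ) 1, IntegrableOn φ (Ioo d 1) := by
  obtain ⟨C, hC, ε, hε, δ, hδ, h⟩ := hb
  intro d hd
  have hε' : 0 < min ε (1 / 2) := lt_min hε (by norm_num)
  have hε2 : min ε (1 / 2) ≤ 1 / 2 := min_le_right _ _
  refine phi_int hφ.continuousOn (e := -1 + min ε (1 / 2)) (by linarith)
    (growth k φ _ (by linarith) hφ ⟨C, hC.le, δ, hδ, fun x hx => ?_⟩) hd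
  have hx0 : 0 < 1 - x := by linarith [hx.2]
  have hx1 : 1 - x ≤ 1 := by linarith [hx.1, hδ.2]
  have h1 := h x hx
  rw [abs_mul, abs_of_pos (pow_pos hx0 k)] at h1
  rw [Real.rpow_sub hx0, Real.rpow_natCast, mul_div_assoc', le_div_iff₀ (pow_pos hx0 k), mul_comm]
  refine h1.trans (mul_le_mul_of_nonneg_left ?_ hC.le)
  exact Real.rpow_le_rpow_of_exponent_ge hx0 hx1 (by linarith [min_le_left ε (1 / 2)])

/-- Let `φ : (0,1) → [0,∞)` be `C^k` with
`|(1-ℰ)^k φ^{(k)}(ℰ)| ≤ C(1-ℰ)^{-1+ε}` near `ℰ = 1`. Then: (i) for `i ≥ 0`, `g_i`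
is `C^{k+1}` on `(0,∞)` with `g_i' = i e^{-2η} g_{i-1}` (`i > 0`) and
`g_0'(η) = e^{-η} φ(e^{-η})`; (ii) for `-1 < i < 0`, `g_i` is `C^k`, and `C^{k+1}`
if additionally `ℰ ↦ (1-ℰ)^k φ^{(k)}(ℰ)` is Hölder continuous with exponent
`α > -i`. -/
theorem stmt11
    (k : ℕ) (φ : ℝ → ℝ)
    (hφnonneg : ∀ x ∈ Ioo (0:ℝ) 1, 0 ≤ φ x)
    (hφCk : ContDiffOn ℝ k φ (Ioo 0 1))
    (hφbound : ∃ C > (0:ℝ), ∃ ε > (0:ℝ), ∃ δ ∈ Ioo (0:ℝ) 1,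
      ∀ x ∈ Ioo (1 - δ) 1,
        |(1 - x) ^ k * iteratedDerivWithin k φ (Ioo 0 1) x| ≤ C * (1 - x) ^ (-1 + ε)) :
    (∀ i : ℝ, 0 ≤ i → ContDiffOn ℝ (k + 1) (gfun φ i) (Ioi 0)) ∧
    (∀ i : ℝ, 0 < i → ∀ η : ℝ, 0 < η →
      HasDerivAt (gfun φ i) (i * Real.exp (-2 * η) * gfun φ (i - 1) η) η) ∧
    (∀ η : ℝ, 0 < η →
      HasDerivAt (gfun φ 0) (Real.exp (-η) * φ (Real.exp (-η))) η) ∧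
    (∀ i : ℝ, -1 < i → i < 0 → ContDiffOn ℝ k (gfun φ i) (Ioi 0)) ∧
    (∀ i : ℝ, -1 < i → i < 0 → ∀ α : ℝ, -i < α → ∀ Cα : ℝ,
      (∀ x ∈ Ioo (0:ℝ) 1, ∀ y ∈ Ioo (0:ℝ) 1,
        |(1 - x) ^ k * iteratedDerivWithin k φ (Ioo 0 1) x -
          (1 - y) ^ k * iteratedDerivWithin k φ (Ioo 0 1) y| ≤ Cα * |x - y| ^ α) →
      ContDiffOn ℝ (k + 1) (gfun φ i) (Ioi 0)) := by

  have hint := int_of_hyp hφCk hφbound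
  have hA : ∀ i : ℝ, -1 < i → ContDiffOn ℝ k (gfun φ i) (Ioi 0) := fun i hi =>
    gfun_contDiffOn fun u hu => GG_contDiffAt hφCk hint hu hi
  refine ⟨fun i hi => ?_, fun i hi η hη => gfun_hasDerivAt hφCk hint hi hη,
    fun η hη => gfun_zero_hasDerivAt hφCk.continuousOn hint hη, fun i hi _ => hA i hi,
    fun i hi hi0 α hα Cα h => ?_⟩
  · rcases eq_or_lt_of_le hi with h0 | h0
    · subst h0
      refine contDiffOn_succ_of (fun η hη => gfun_zero_hasDerivAt hφCk.continuousOn hint hη) ?_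
      have h1 : ContDiffOn ℝ k (fun η : ℝ => Real.exp (-η)) (Ioi 0) := by fun_prop
      exact h1.mul (hφCk.comp h1 fun η hη => exp_mem' hη)
    · refine contDiffOn_succ_of (fun η hη => gfun_hasDerivAt hφCk hint h0 hη) ?_
      have h1 : ContDiffOn ℝ k (fun η : ℝ => i * Real.exp (-2 * η)) (Ioi 0) := by fun_prop
      exact h1.mul (hA (i - 1) (by linarith))
  · have hα0 : 0 < α := by linarith
    have hmin : -i < min α 1 := lt_min hα (by linarith)
    refine gfun_contDiffOn fun u hu => ?_
    have := GG_contDiffAt_holder hφCk hint hu (i := i) hi (lt_min hα0 one_pos) (min_le_right _ _)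
      (by linarith) (QH_of_hyp hφCk hα0 h)
    exact_mod_cast this
end
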